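/- Let 𝕋_3 denote the 3-uniform generalized triangle. There exist constants N_0 and c > 0 such that for all integers n ≥ N_0 and all integers t with 0 ≤ t ≤ c·n, one has EX(n,(t+1)𝕋_3) = { K_t^3 ⋈ T_3(n−t,3) }. -/

import Mathlib

open Filter

namespace DensityCH

/-- An `r`-uniform hypergraph with vertices in `ℕ`:
a finite vertex set together with a set of `r`-element edges. -/
structure HGraph (r : ℕ) where
  verts : Finset ℕ
  edges : Finset (Finset ℕ)
  edges_sub : ∀ e ∈ edges, e ⊆ verts
  edges_card : ∀ e ∈ edges, e.card = r

namespace HGraph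

/-- Build an `r`-graph from a vertex set and a set of candidate edges,
keeping exactly the well-formed candidates. -/
def ofEdges (r : ℕ) (V : Finset ℕ) (E : Finset (Finset ℕ)) : HGraph r where
  verts := V
  edges := E.filter fun e => e ⊆ V ∧ e.card = r
  edges_sub := fun e he => ((Finset.mem_filter.mp he).2).1
  edges_card := fun e he => ((Finset.mem_filter.mp he).2).2

variable {r : ℕ}

/-- `H` contains a copy of `F`, i.e. a subgraph isomorphic to `F`. -/
def IsCopyIn (F H : HGraph r) : Prop :=
  ∃ f : ℕ → ℕ, Set.InjOn f ↑F.verts ∧ (∀ v ∈ F.verts, f v ∈ H.verts) ∧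
    ∀ e ∈ F.edges, e.image f ∈ H.edges

/-- The subgraph of `H` induced on `S`. -/
def induce (H : HGraph r) (S : Finset ℕ) : HGraph r :=
  ofEdges r (H.verts ∩ S) (H.edges.filter fun e => e ⊆ S)

/-- Delete a vertex from `H`. -/
def deleteVert (H : HGraph r) (v : ℕ) : HGraph r :=
  ofEdges r (H.verts.erase v) (H.edges.filter fun e => v ∉ e)

/-- The degree of a vertex. -/
def deg (H : HGraph r) (v : ℕ) : ℕ := (H.edges.filter fun e => v ∈ e).card

/-- The maximum degree `Δ(H)`. -/
def maxDeg (H : HGraph r) : ℕ := H.verts.sup H.deg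

/-- The minimum degree `δ(H)`. -/
def minDeg (H : HGraph r) : ℕ :=
  if h : H.verts.Nonempty then H.verts.inf' h H.deg else 0

/-- The average degree `d(H) = r·|E(H)|/|V(H)|`. -/
noncomputable def avgDeg (H : HGraph r) : ℝ :=
  (r : ℝ) * (H.edges.card : ℝ) / (H.verts.card : ℝ)

/-- `H` contains `k` pairwise vertex-disjoint copies of `F`, i.e. `ν(F,H) ≥ k`. -/
def HasMatching (F H : HGraph r) (k : ℕ) : Prop :=
  ∃ S : Fin k → Finset ℕ,
    (∀ i, S i ⊆ H.verts ∧ (S i).card = F.verts.card) ∧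
    (∀ i j, i ≠ j → Disjoint (S i) (S j)) ∧
    ∀ i, F.IsCopyIn (H.induce (S i))

/-- Isomorphism of hypergraphs. -/
def Iso (G H : HGraph r) : Prop :=
  ∃ f : ℕ → ℕ, Set.BijOn f ↑G.verts ↑H.verts ∧
    ∀ e ∈ Finset.powersetCard r G.verts, (e ∈ G.edges ↔ e.image f ∈ H.edges)

/-- The join `G ⋈ H`: all edges of `G`, all edges of `H`, and all `r`-sets meeting
both vertex sets. -/
def join (G H : HGraph r) : HGraph r :=
  ofEdges r (G.verts ∪ H.verts)
    (G.edges ∪ H.edges ∪ ((Finset.powersetCard r (G.verts ∪ H.verts)).filter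
      fun e => (e ∩ G.verts).Nonempty ∧ (e ∩ H.verts).Nonempty))

end HGraph

/-- The complete `r`-graph on a vertex set `S`. -/
def completeOn (r : ℕ) (S : Finset ℕ) : HGraph r :=
  HGraph.ofEdges r S (Finset.powersetCard r S)

/-- The `r`-graph on `V` with no edges. -/
def emptyOn (r : ℕ) (V : Finset ℕ) : HGraph r := HGraph.ofEdges r V ∅

/-- The Turán number `ex(n,F)`. -/
noncomputable def exN (r n : ℕ) (F : HGraph r) : ℕ :=
  sSup {m | ∃ H : HGraph r, H.verts.card = n ∧ ¬ F.IsCopyIn H ∧ H.edges.card = m}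

/-- `d(n,F) = r·ex(n,F)/n`. -/
noncomputable def dN (r n : ℕ) (F : HGraph r) : ℝ := (r : ℝ) * (exN r n F : ℝ) / (n : ℝ)

/-- `δ(n,F) = ex(n,F) − ex(n−1,F)` (as a real number). -/
noncomputable def deltaN (r n : ℕ) (F : HGraph r) : ℝ := (exN r n F : ℝ) - (exN r (n-1) F : ℝ)

/-- `x` is the Turán density `π(F)`, i.e. the limit of `ex(n,F)/C(n,r)`. -/
def HasTuranDensity (r : ℕ) (F : HGraph r) (x : ℝ) : Prop :=
  Tendsto (fun n : ℕ => (exN r n F : ℝ) / (n.choose r : ℝ)) atTop (nhds x)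

/-- `ex(n,(t+1)F)`: the maximum number of edges of an `n`-vertex `r`-graph with no
`t+1` pairwise vertex-disjoint copies of `F`. -/
noncomputable def exMatchN (r n t : ℕ) (F : HGraph r) : ℕ :=
  sSup {m | ∃ H : HGraph r, H.verts.card = n ∧ ¬ F.HasMatching H (t+1) ∧ H.edges.card = m}

/-- `H ∈ EX(n,F)`. -/
def IsExtremalFree (r n : ℕ) (F H : HGraph r) : Prop :=
  H.verts.card = n ∧ ¬ F.IsCopyIn H ∧ H.edges.card = exN r n F

/-- `H ∈ EX(n,(t+1)F)`. -/
def IsExtremalMatchingFree (r n t : ℕ) (F H : HGraph r) : Prop :=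
  H.verts.card = n ∧ ¬ F.HasMatching H (t+1) ∧ H.edges.card = exMatchN r n t F

/-- `F` is `(f1, f2)`-bounded at `n`. -/
def BoundedAt (r n : ℕ) (F : HGraph r) (f1 f2 : ℝ) : Prop :=
  ∀ H : HGraph r, H.verts.card = n → ¬ F.IsCopyIn H →
    dN r n F - f1 ≤ H.avgDeg → (H.maxDeg : ℝ) ≤ dN r n F + f2

/-- `ex(·,F)` is `g`-smooth at `n`: `|δ(n,F) − d(n−1,F)| ≤ g(n)`. -/
def SmoothAt (r n : ℕ) (F : HGraph r) (g : ℝ) : Prop :=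
  |deltaN r n F - dN r (n-1) F| ≤ g

/-- The collection `H 0, …, H t` (on a common vertex set) has a rainbow `F`-matching. -/
def HasRainbowMatching (r t : ℕ) (F : HGraph r) (H : Fin (t+1) → HGraph r) : Prop :=
  ∃ S : Fin (t+1) → Finset ℕ,
    (∀ i, S i ⊆ (H i).verts ∧ (S i).card = F.verts.card) ∧
    (∀ i j, i ≠ j → Disjoint (S i) (S j)) ∧
    ∀ i, F.IsCopyIn ((H i).induce (S i))

/-!  Patterns -/

/-- An `r`-uniform pattern: a finite index set together with a collection of
`r`-multisets on it. -/
structure Pattern (r : ℕ) where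
  idx : Finset ℕ
  mE : Finset (Multiset ℕ)
  card_eq : ∀ s ∈ mE, Multiset.card s = r
  mem_idx : ∀ s ∈ mE, ∀ i ∈ s, i ∈ idx

namespace Pattern

variable {r : ℕ}

/-- The pattern `P − i`. -/
def erase (P : Pattern r) (i : ℕ) : Pattern r where
  idx := P.idx.erase i
  mE := P.mE.filter fun s => i ∉ s
  card_eq := fun s hs => P.card_eq s (Finset.mem_filter.mp hs).1
  mem_idx := by
    intro s hs j hj
    have h1 := Finset.mem_filter.mp hs
    refine Finset.mem_erase.mpr ⟨?_, P.mem_idx s h1.1 j hj⟩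
    rintro rfl
    exact h1.2 hj

/-- `H` is a `P`-construction: a blowup of the pattern `P`. -/
def IsConstruction (P : Pattern r) (H : HGraph r) : Prop :=
  ∃ part : ℕ → ℕ, (∀ v ∈ H.verts, part v ∈ P.idx) ∧
    ∀ e : Finset ℕ, e ∈ H.edges ↔ (e ⊆ H.verts ∧ e.card = r ∧ Multiset.map part e.val ∈ P.mE)

/-- `H` is a `P`-subconstruction: a subgraph of a `P`-construction. -/
def IsSubconstruction (P : Pattern r) (H : HGraph r) : Prop :=
  ∃ G : HGraph r, P.IsConstruction G ∧ H.verts ⊆ G.verts ∧ H.edges ⊆ G.edges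

end Pattern

/-- `Λ(P,n)`: the maximum number of edges of an `n`-vertex `P`-construction. -/
noncomputable def patEx (r : ℕ) (P : Pattern r) (n : ℕ) : ℕ :=
  sSup {m | ∃ H : HGraph r, P.IsConstruction H ∧ H.verts.card = n ∧ H.edges.card = m}

/-- The Lagrangian `λ(P) = lim Λ(P,n)/C(n,r)`. -/
noncomputable def patLagrangian (r : ℕ) (P : Pattern r) : ℝ :=
  limUnder atTop fun n : ℕ => (patEx r P n : ℝ) / (n.choose r : ℝ)

/-- The pattern `P` is minimal: `λ(P−i) < λ(P)` for all `i`. -/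
def Pattern.Minimal {r : ℕ} (P : Pattern r) : Prop :=
  ∀ i ∈ P.idx, patLagrangian r (P.erase i) < patLagrangian r P

/-- `(F,P)` is a Turán pair. -/
def IsTuranPair (r : ℕ) (F : HGraph r) (P : Pattern r) : Prop :=
  (∀ H : HGraph r, P.IsConstruction H → ¬ F.IsCopyIn H) ∧
  (∀ H : HGraph r, ¬ F.IsCopyIn H → H.edges.card = exN r H.verts.card F →
    P.IsConstruction H)

/-- `F` is edge-stable with respect to `P` (with Turán density `π`). -/
def EdgeStable (r : ℕ) (F : HGraph r) (P : Pattern r) (π : ℝ) : Prop :=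
  ∀ δ : ℝ, 0 < δ → ∃ N₀ : ℕ, ∃ ζ : ℝ, 0 < ζ ∧
    ∀ H : HGraph r, N₀ ≤ H.verts.card → ¬ F.IsCopyIn H →
      (π - ζ) * (H.verts.card.choose r : ℝ) ≤ (H.edges.card : ℝ) →
      ∃ H' : HGraph r, H'.verts ⊆ H.verts ∧ H'.edges ⊆ H.edges ∧
        (π - δ) * (H.verts.card.choose r : ℝ) ≤ (H'.edges.card : ℝ) ∧
        P.IsSubconstruction H'

/-- `F` is weakly vertex-extendable with respect to `P` (with Turán density `π`). -/
def WeaklyVertexExtendable (r : ℕ) (F : HGraph r) (P : Pattern r) (π : ℝ) : Prop :=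
  ∀ δ : ℝ, 0 < δ → ∃ N₀ : ℕ, ∃ ζ : ℝ, 0 < ζ ∧
    ∀ H : HGraph r, N₀ ≤ H.verts.card → ¬ F.IsCopyIn H →
      (π - ζ) * (((H.verts.card - 1).choose (r-1) : ℕ) : ℝ) ≤ (H.minDeg : ℝ) →
      ∀ v ∈ H.verts, P.IsSubconstruction (H.deleteVert v) →
        (H.deg v : ℝ) ≤ (π + δ) * (((H.verts.card - 1).choose (r-1) : ℕ) : ℝ)

/-- `F` is degree-stable with respect to `P` (with Turán density `π`). -/
def DegreeStable (r : ℕ) (F : HGraph r) (P : Pattern r) (π : ℝ) : Prop :=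
  ∃ ζ : ℝ, 0 < ζ ∧ ∃ N₀ : ℕ,
    ∀ H : HGraph r, N₀ ≤ H.verts.card → ¬ F.IsCopyIn H →
      (π - ζ) * (((H.verts.card - 1).choose (r-1) : ℕ) : ℝ) ≤ (H.minDeg : ℝ) →
      P.IsSubconstruction H

/-!  Concrete constructions -/

/-- The generalized Turán graph `T_r(·,ℓ)` on vertex set `V` (parts are residue
classes mod `ℓ`; on an interval these are balanced). -/
def turanOn (r ℓ : ℕ) (V : Finset ℕ) : HGraph r :=
  HGraph.ofEdges r V ((Finset.powersetCard r V).filter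
    fun e => ∀ u ∈ e, ∀ v ∈ e, u % ℓ = v % ℓ → u = v)

/-- The `r`-graph on `V₁ ∪ V₂` whose edges are all `r`-sets meeting both parts. -/
def crossOn (r : ℕ) (V₁ V₂ : Finset ℕ) : HGraph r :=
  HGraph.ofEdges r (V₁ ∪ V₂) ((Finset.powersetCard r (V₁ ∪ V₂)).filter
    fun e => (e ∩ V₁).Nonempty ∧ (e ∩ V₂).Nonempty)

/-- The `r`-graph on `V₁ ∪ V₂` whose edges are all `r`-sets meeting `V₁` in an odd
number of vertices. -/
def oddCross (r : ℕ) (V₁ V₂ : Finset ℕ) : HGraph r :=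
  HGraph.ofEdges r (V₁ ∪ V₂) ((Finset.powersetCard r (V₁ ∪ V₂)).filter
    fun e => Odd (e ∩ V₁).card)

/-- The Fano plane. -/
def fano : HGraph 3 :=
  HGraph.ofEdges 3 (Finset.Icc 1 7)
    {({1,2,3} : Finset ℕ), {3,4,5}, {5,6,1}, {1,7,4}, {2,7,5}, {3,7,6}, {2,4,6}}

/-- The generalized triangle `𝕋_r`, with edges `{1,…,r}`, `{1,…,r−1,r+1}` and
`{r,…,2r−1}`. -/
def genTri (r : ℕ) : HGraph r :=
  HGraph.ofEdges r (Finset.Icc 1 (2*r - 1))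
    {Finset.Icc 1 r, Finset.Icc 1 (r-1) ∪ {r+1}, Finset.Icc r (2*r - 1)}

/-- `G` is a blowup of the `r`-graph `W` (viewing `W` as a pattern). -/
def IsBlowupOf {r : ℕ} (W G : HGraph r) : Prop :=
  ∃ part : ℕ → ℕ, (∀ v ∈ G.verts, part v ∈ W.verts) ∧
    ∀ e : Finset ℕ, e ∈ G.edges ↔
      (e ⊆ G.verts ∧ e.card = r ∧ ∃ f ∈ W.edges, Multiset.map part e.val = f.val)

/-- The expansion `H^F` of an `r`-graph `F`: for every pair of vertices not covered
by an edge of `F`, add an edge consisting of this pair plus `r−2` new vertices,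
these sets of new vertices being pairwise disjoint. -/
def HGraph.expansion {r : ℕ} (F : HGraph r) : HGraph r :=
  HGraph.ofEdges r
    (F.verts ∪ (((F.verts ×ˢ F.verts).filter fun p =>
        p.1 < p.2 ∧ ∀ e ∈ F.edges, ¬ (p.1 ∈ e ∧ p.2 ∈ e)).biUnion fun p =>
      (Finset.range (r-2)).image fun s =>
        (F.verts.sup id + 1) + (p.1 * (F.verts.sup id + 1) + p.2) * r + s))
    (F.edges ∪ (((F.verts ×ˢ F.verts).filter fun p =>
        p.1 < p.2 ∧ ∀ e ∈ F.edges, ¬ (p.1 ∈ e ∧ p.2 ∈ e)).image fun p =>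
      insert p.1 (insert p.2 ((Finset.range (r-2)).image fun s =>
        (F.verts.sup id + 1) + (p.1 * (F.verts.sup id + 1) + p.2) * r + s))))

/-- A `2`-graph is a tree on `k` vertices: `k` vertices, `k−1` edges, connected. -/
def IsTreeGraph (k : ℕ) (T : HGraph 2) : Prop :=
  T.verts.card = k ∧ T.edges.card = k - 1 ∧
  ∀ S : Finset ℕ, S ⊆ T.verts → S.Nonempty → S ≠ T.verts →
    ∃ e ∈ T.edges, (e ∩ S).Nonempty ∧ (e \ S).Nonempty

/-- `T` satisfies the Erdős–Sós property for `k`: every graph with average degree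
greater than `k−2` contains `T`. -/
def ErdosSos (k : ℕ) (T : HGraph 2) : Prop :=
  ∀ G : HGraph 2, ((k : ℝ) - 2) * (G.verts.card : ℝ) < 2 * (G.edges.card : ℝ) →
    T.IsCopyIn G

/-- The `(r−2)`-expansion `Exp(T)` of a `2`-graph `T`: enlarge every edge by one
common fixed set of `r−2` new vertices. -/
def expTree (r : ℕ) (T : HGraph 2) : HGraph r :=
  HGraph.ofEdges r
    (T.verts ∪ ((Finset.range (r-2)).image fun s => T.verts.sup id + 1 + s))
    (T.edges.image fun e =>
      e ∪ ((Finset.range (r-2)).image fun s => T.verts.sup id + 1 + s))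

/-- The chromatic number of a `2`-graph. -/
noncomputable def chrom (F : HGraph 2) : ℕ :=
  sInf {k | ∃ c : ℕ → ℕ, (∀ v ∈ F.verts, c v < k) ∧
    ∀ e ∈ F.edges, ∀ u ∈ e, ∀ v ∈ e, u ≠ v → c u ≠ c v}

/-- A graph is edge-critical if deleting some edge lowers its chromatic number. -/
def EdgeCritical (F : HGraph 2) : Prop :=
  ∃ e ∈ F.edges, chrom (HGraph.ofEdges 2 F.verts (F.edges.erase e)) < chrom F

/-- `H` is semibipartite: the vertex set splits into `V₁ ∪ V₂` so that every edge
has exactly one vertex in `V₁`. -/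
def Semibipartite (r : ℕ) (H : HGraph r) : Prop :=
  ∃ V₁ ⊆ H.verts, ∀ e ∈ H.edges, (e ∩ V₁).card = 1

/-- `H` is a `K_ℓ^r`-subconstruction, i.e. an `ℓ`-partite `r`-graph. -/
def IsKlSub (r ℓ : ℕ) (H : HGraph r) : Prop :=
  ∃ f : ℕ → ℕ, (∀ v ∈ H.verts, f v < ℓ) ∧
    ∀ e ∈ H.edges, ∀ u ∈ e, ∀ v ∈ e, f u = f v → u = v

/-- The Lagrangian `λ(W)` of an `r`-graph `W`, viewing `W` as a pattern. -/
noncomputable def hgLagrangian (r : ℕ) (W : HGraph r) : ℝ :=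
  limUnder atTop fun n : ℕ =>
    ((sSup {m | ∃ G : HGraph r, IsBlowupOf W G ∧ G.verts.card = n ∧ G.edges.card = m} : ℕ) : ℝ)
      / (n.choose r : ℝ)

/-- The `r`-graph `B(r,ℓ+1)`. -/
def BGraph (r ℓ : ℕ) : HGraph r :=
  HGraph.ofEdges r (Finset.Icc 1 (ℓ+1))
    (insert (Finset.Icc 1 r)
      ((Finset.powersetCard r (Finset.Icc 2 (ℓ+1))).filter
        fun e => (e ∩ Finset.Icc 2 r).card ≤ 1))

/-- The `r`-uniform matching of size two, `M_2^r`. -/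
def matching2 (r : ℕ) : HGraph r :=
  HGraph.ofEdges r (Finset.Icc 1 (2*r)) {Finset.Icc 1 r, Finset.Icc (r+1) (2*r)}

/-- The expanded triangle `𝓒_3^{2r}`. -/
def expandedTriangle (r : ℕ) : HGraph (2*r) :=
  HGraph.ofEdges (2*r) (Finset.Icc 1 (3*r))
    {Finset.Icc 1 (2*r), Finset.Icc (r+1) (3*r), Finset.Icc 1 r ∪ Finset.Icc (2*r+1) (3*r)}

/-- The `4`-graph `𝔽_{4,3}`. -/
def F43 : HGraph 4 :=
  HGraph.ofEdges 4 (Finset.Icc 1 7)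
    {({1,2,3,4} : Finset ℕ), {1,2,3,5}, {1,2,3,6}, {1,2,3,7}, {4,5,6,7}}

/-- The `3`-graph `𝔽_{3,2}`. -/
def F32 : HGraph 3 :=
  HGraph.ofEdges 3 (Finset.Icc 1 5)
    {({1,2,3} : Finset ℕ), {1,2,4}, {1,2,5}, {3,4,5}}

/-- `H` contains pairwise vertex-disjoint copies of `F i`, `ts i` many of each. -/
def HasMixedMatching (r k : ℕ) (F : Fin k → HGraph r) (ts : Fin k → ℕ)
    (H : HGraph r) : Prop :=
  ∃ S : (i : Fin k) → Fin (ts i) → Finset ℕ,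
    (∀ i j, S i j ⊆ H.verts ∧ (S i j).card = (F i).verts.card) ∧
    (∀ p q : Σ i : Fin k, Fin (ts i), p ≠ q → Disjoint (S p.1 p.2) (S q.1 q.2)) ∧
    ∀ i j, (F i).IsCopyIn (H.induce (S i j))

/-- `ex(n, ⊔ᵢ tᵢ Fᵢ)`. -/
noncomputable def exMixedN (r k : ℕ) (F : Fin k → HGraph r) (ts : Fin k → ℕ)
    (n : ℕ) : ℕ :=
  sSup {m | ∃ H : HGraph r, H.verts.card = n ∧ ¬ HasMixedMatching r k F ts H ∧
    H.edges.card = m}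

/-- `ex(n, {F₁,…,F_k})`. -/
noncomputable def exFamN (r k : ℕ) (F : Fin k → HGraph r) (n : ℕ) : ℕ :=
  sSup {m | ∃ H : HGraph r, H.verts.card = n ∧ (∀ i, ¬ (F i).IsCopyIn H) ∧
    H.edges.card = m}


section
open Finset


/-- symmetric irreflexive ternary relation -/
structure TG where
  R : ℕ → ℕ → ℕ → Prop
  s12 : ∀ x y z, R x y z → R y x z
  s23 : ∀ x y z, R x y z → R x z y
  ne : ∀ x y z, R x y z → x ≠ y

namespace TG
variable (G : TG)

lemma ne13 {x y z} (h : G.R x y z) : x ≠ z := G.ne _ _ _ (G.s23 _ _ _ h)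
lemma ne23 {x y z} (h : G.R x y z) : y ≠ z := G.ne _ _ _ (G.s23 _ _ _ (G.s12 _ _ _ h))
lemma ne12 {x y z} (h : G.R x y z) : x ≠ y := G.ne _ _ _ h
lemma rot {x y z} (h : G.R x y z) : G.R y z x := G.s23 _ _ _ (G.s12 _ _ _ h)
lemma rot' {x y z} (h : G.R x y z) : G.R z x y := G.s12 _ _ _ (G.s23 _ _ _ h)

open scoped Classical in
noncomputable def nb (V : Finset ℕ) (x y : ℕ) : Finset ℕ := V.filter (fun z => G.R x y z)

open scoped Classical in
/-- link pairs of `v` in `B × C` -/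
noncomputable def q (B C : Finset ℕ) (v : ℕ) : ℕ :=
  ((B ×ˢ C).filter (fun p => G.R v p.1 p.2)).card

noncomputable def dg (V : Finset ℕ) (v : ℕ) : ℕ := G.q V V v

open scoped Classical in
noncomputable def tot (V : Finset ℕ) : ℕ :=
  ((V ×ˢ V ×ˢ V).filter (fun p => G.R p.1 p.2.1 p.2.2)).card

def Free (V : Finset ℕ) : Prop := ∀ p ∈ V, ∀ q ∈ V, ∀ r ∈ V, ∀ s ∈ V, ∀ w ∈ V,
  G.R p q r → G.R p q s → r ≠ s → G.R r s w → w = p ∨ w = q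

variable {G}

lemma mem_nb {V x y z} : z ∈ G.nb V x y ↔ z ∈ V ∧ G.R x y z := by simp [nb]

lemma nb_comm (V x y) : G.nb V x y = G.nb V y x := by
  ext z; simp only [mem_nb]
  exact ⟨fun h => ⟨h.1, G.s12 _ _ _ h.2⟩, fun h => ⟨h.1, G.s12 _ _ _ h.2⟩⟩

lemma q_eq_sum (B C v) : G.q B C v = ∑ b ∈ B, (G.nb C v b).card := by
  classical
  unfold q nb
  simp only [card_filter, sum_product]

lemma q_comm (B C v) : G.q B C v = G.q C B v := by
  classical
  unfold q
  refine card_bij (fun p _ => (p.2, p.1)) ?_ ?_ ?_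
  · rintro ⟨a, b⟩ h; simp only [mem_filter, mem_product] at h ⊢
    exact ⟨⟨h.1.2, h.1.1⟩, G.s23 _ _ _ h.2⟩
  · rintro ⟨a, b⟩ _ ⟨c, d⟩ _ h; simp at h ⊢; exact ⟨h.2, h.1⟩
  · rintro ⟨a, b⟩ h; simp only [mem_filter, mem_product] at h
    exact ⟨(b, a), by simp only [mem_filter, mem_product]; exact ⟨⟨h.1.2, h.1.1⟩, G.s23 _ _ _ h.2⟩, rfl⟩

lemma q_mono {B B' C C' : Finset ℕ} (h : B ⊆ B') (h' : C ⊆ C') (v) : G.q B C v ≤ G.q B' C' v := by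
  classical
  exact card_le_card (filter_subset_filter _ (product_subset_product h h'))

lemma q_union_left (B B' C v) : G.q (B ∪ B') C v ≤ G.q B C v + G.q B' C v := by
  classical
  unfold q
  rw [union_product, filter_union]
  exact card_union_le _ _

lemma q_union_right (B C C' v) : G.q B (C ∪ C') v ≤ G.q B C v + G.q B C' v := by
  rw [q_comm, q_comm B C, q_comm B C']; exact q_union_left _ _ _ _

lemma q_le (B C v) : G.q B C v ≤ B.card * C.card := by
  classical
  exact (card_filter_le _ _).trans (card_product _ _).le

lemma nb_card_le (V x y) : (G.nb V x y).card ≤ V.card := by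
  classical
  exact card_filter_le _ _

lemma tot_eq_sum (V) : G.tot V = ∑ x ∈ V, G.dg V x := by
  classical
  unfold tot dg q
  simp only [card_filter, sum_product]

lemma Free.mono {V W} (h : G.Free V) (hW : W ⊆ V) : G.Free W :=
  fun p hp q hq r hr s hs w hw => h p (hW hp) q (hW hq) r (hW hr) s (hW hs) w (hW hw)

lemma card_le_two_of {s : Finset ℕ} {x y : ℕ} (h : ∀ w ∈ s, w = x ∨ w = y) : s.card ≤ 2 := by
  have : s ⊆ {x, y} := fun w hw => by simpa using h w hw
  exact (card_le_card this).trans card_le_two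

/-- pairs inside a codegree neighbourhood are light -/
lemma Free.light {V x y r s} (h : G.Free V) (hx : x ∈ V) (hy : y ∈ V)
    (hr : r ∈ G.nb V x y) (hs : s ∈ G.nb V x y) (hrs : r ≠ s) : (G.nb V r s).card ≤ 2 := by
  rw [mem_nb] at hr hs
  refine card_le_two_of (x := x) (y := y) fun w hw => ?_
  rw [mem_nb] at hw
  exact h x hx y hy r hr.1 s hs.1 w hw.1 hr.2 hs.2 hrs hw.2

open scoped Classical in
/-- light link pairs -/
noncomputable def lt (G : TG) (V : Finset ℕ) (v : ℕ) : ℕ :=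
  ((V ×ˢ V).filter (fun p => G.R v p.1 p.2 ∧ (G.nb V p.1 p.2).card ≤ 2)).card

lemma sum_lt_le (V) : ∑ v ∈ V, G.lt V v ≤ 2 * V.card ^ 2 := by
  classical
  unfold lt
  simp only [card_filter]
  rw [sum_comm]
  calc ∑ p ∈ V ×ˢ V, ∑ v ∈ V, (if G.R v p.1 p.2 ∧ (G.nb V p.1 p.2).card ≤ 2 then 1 else 0)
      ≤ ∑ p ∈ V ×ˢ V, 2 := by
        refine sum_le_sum fun p _ => ?_
        rw [← card_filter]
        by_cases hp : (G.nb V p.1 p.2).card ≤ 2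
        · refine le_trans (card_le_card ?_) hp
          intro v hv
          rw [mem_filter] at hv
          rw [mem_nb]
          exact ⟨hv.1, G.rot hv.2.1⟩
        · simp [hp]
    _ = 2 * V.card ^ 2 := by simp [card_product]; ring

/-- `K` : two vertices with a large common link are not in an edge -/
lemma Free.no_edge {V B C : Finset ℕ} (h : G.Free V) (hB : B ⊆ V) (hC : C ⊆ V) {v v' w : ℕ}
    (hv : v ∈ V) (hv' : v' ∈ V) (hw : w ∈ V)
    (hq : B.card * C.card + B.card + C.card < G.q B C v + G.q B C v') : ¬ G.R v v' w := by
  classical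
  intro hR
  set S := (B ×ˢ C).filter (fun p => G.R v p.1 p.2) with hS
  set S' := (B ×ˢ C).filter (fun p => G.R v' p.1 p.2) with hS'
  have h1 : (S ∪ S').card ≤ B.card * C.card := by
    rw [← card_product]
    exact card_le_card (union_subset (filter_subset _ _) (filter_subset _ _))
  have h2 : (S ∪ S').card + (S ∩ S').card = S.card + S'.card := card_union_add_card_inter _ _
  have h3 : S.card = G.q B C v := rfl
  have h4 : S'.card = G.q B C v' := rfl
  have h5 : B.card + C.card < (S ∩ S').card := by omega
  have h6 : S ∩ S' ⊆ (B.image fun b => (b, w)) ∪ (C.image fun c => (w, c)) := by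
    rintro ⟨b, c⟩ hp
    simp only [hS, hS', mem_inter, mem_filter, mem_product] at hp
    obtain ⟨⟨⟨hb, hc⟩, r1⟩, _, r2⟩ := hp
    have := h b (hB hb) c (hC hc) v hv v' hv' w hw (G.rot r1) (G.rot r2) (G.ne12 hR) hR
    simp only [mem_union, mem_image]
    rcases this with rfl | rfl
    · exact Or.inr ⟨c, hc, rfl⟩
    · exact Or.inl ⟨b, hb, rfl⟩
  have h7 := (card_le_card h6).trans (card_union_le _ _)
  have h8 : (B.image fun b => (b, w)).card ≤ B.card := card_image_le
  have h9 : (C.image fun c => (w, c)).card ≤ C.card := card_image_le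
  omega

end TG

namespace TG
variable {G : TG}

lemma avg_edge (D : Finset ℕ) (N : ℕ → Finset ℕ) (hN : ∀ y ∈ D, N y ⊆ D)
    (hsym : ∀ b ∈ D, ∀ c ∈ D, c ∈ N b → b ∈ N c) (hS : 0 < ∑ y ∈ D, (N y).card) :
    ∃ b ∈ D, ∃ c ∈ N b, 2 * ∑ y ∈ D, (N y).card ≤ D.card * ((N b).card + (N c).card) := by
  classical
  by_contra! hcon
  set S := ∑ y ∈ D, (N y).card with hSd
  have h1 : ∑ b ∈ D, ∑ c ∈ N b, D.card * ((N b).card + (N c).card) < ∑ b ∈ D, ∑ c ∈ N b, 2 * S := by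
    obtain ⟨b, hb, hb'⟩ : ∃ b ∈ D, 0 < (N b).card := by
      by_contra! h
      have : S = 0 := sum_eq_zero fun y hy => Nat.le_zero.1 (h y hy)
      omega
    refine sum_lt_sum (fun b hb => sum_le_sum fun c hc => (hcon b hb c hc).le) ⟨b, hb, ?_⟩
    refine sum_lt_sum_of_nonempty (card_pos.1 hb') fun c hc => hcon b hb c hc
  have h2 : ∑ b ∈ D, ∑ c ∈ N b, 2 * S = 2 * S * S := by
    simp only [sum_const, smul_eq_mul, ← sum_mul]
    rw [← hSd]; ring
  have h3 : ∑ b ∈ D, ∑ c ∈ N b, (N c).card = ∑ b ∈ D, (N b).card * (N b).card := by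
    have : ∀ b ∈ D, ∑ c ∈ N b, (N c).card = ∑ c ∈ D, if c ∈ N b then (N c).card else 0 := by
      intro b hb
      rw [← sum_filter]
      refine sum_congr ?_ fun _ _ => rfl
      ext c; simp only [mem_filter]; exact ⟨fun h => ⟨hN b hb h, h⟩, fun h => h.2⟩
    rw [sum_congr rfl this, sum_comm]
    refine sum_congr rfl fun c hc => ?_
    rw [← sum_filter, sum_const, smul_eq_mul]
    congr 2
    ext b; simp only [mem_filter]
    exact ⟨fun h => hsym b h.1 c hc h.2, fun h => ⟨hN c hc h, hsym c hc b (hN c hc h) h⟩⟩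
  have h4 : ∑ b ∈ D, ∑ c ∈ N b, D.card * ((N b).card + (N c).card)
      = 2 * (D.card * ∑ b ∈ D, (N b).card * (N b).card) := by
    simp only [← mul_sum, sum_add_distrib, h3]
    simp only [sum_const, smul_eq_mul]; ring
  have h5 : S ^ 2 ≤ D.card * ∑ b ∈ D, (N b).card ^ 2 := sq_sum_le_card_mul_sum_sq
  simp only [pow_two] at h5
  rw [h4, h2] at h1
  nlinarith

lemma core {V : Finset ℕ} (hF : G.Free V) (n : ℝ) (hn : n = V.card) (hN : 10 ^ 9 ≤ n)
    (hd : ∀ v ∈ V, (2 / 9 - 1 / 10 ^ 5) * n ^ 2 ≤ G.dg V v) :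
    (∀ x ∈ V, ∀ y ∈ V, ((G.nb V x y).card : ℝ) ≤ (1 / 3 + 1 / 10 ^ 4) * n) ∧
    ∃ A B C : Finset ℕ, A ⊆ V ∧ B ⊆ V ∧ C ⊆ V ∧ Disjoint A B ∧ Disjoint A C ∧ Disjoint B C ∧
      (∀ r ∈ A, ∀ s ∈ A, r ≠ s → (G.nb V r s).card ≤ 2) ∧
      (∀ r ∈ B, ∀ s ∈ B, r ≠ s → (G.nb V r s).card ≤ 2) ∧
      (∀ r ∈ C, ∀ s ∈ C, r ≠ s → (G.nb V r s).card ≤ 2) ∧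
      (A.card : ℝ) ≤ (1 / 3 + 1 / 10 ^ 4) * n ∧ (B.card : ℝ) ≤ (1 / 3 + 1 / 10 ^ 4) * n ∧
      (C.card : ℝ) ≤ (1 / 3 + 1 / 10 ^ 4) * n ∧
      (1 - 3 / 10 ^ 4) * n ≤ A.card + B.card + C.card := by
  classical
  have hVne : V.Nonempty := by
    rw [← card_pos]
    have : (0 : ℝ) < V.card := by rw [← hn]; linarith
    exact_mod_cast this
  obtain ⟨⟨x, y⟩, hxy, hmax⟩ := exists_max_image (V ×ˢ V) (fun p => (G.nb V p.1 p.2).card)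
    (hVne.product hVne)
  rw [mem_product] at hxy
  obtain ⟨hx, hy⟩ := hxy
  simp only at hx hy hmax
  set A := G.nb V x y with hA
  have hAV : A ⊆ V := fun z hz => (mem_nb.1 hz).1
  have hM : ∀ a ∈ V, ∀ b ∈ V, (G.nb V a b).card ≤ A.card := fun a ha b hb =>
    hmax (a, b) (mem_product.2 ⟨ha, hb⟩)
  have hAl : ∀ r ∈ A, ∀ s ∈ A, r ≠ s → (G.nb V r s).card ≤ 2 := fun r hr s hs hrs =>
    hF.light hx hy hr hs hrs
  have hAl' : ∀ r ∈ A, ∀ s ∈ A, (G.nb V r s).card ≤ 2 := by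
    intro r hr s hs
    by_cases hrs : r = s
    · subst hrs
      have : G.nb V r r = ∅ := by
        ext z; simp only [mem_nb, notMem_empty, iff_false]
        rintro ⟨_, h⟩; exact G.ne12 h rfl
      simp [this]
    · exact hAl r hr s hs hrs
  obtain ⟨M, hMd⟩ : ∃ M : ℝ, M = A.card := ⟨_, rfl⟩
  have hM0 : 0 ≤ M := hMd ▸ Nat.cast_nonneg _
  have hMn : M ≤ n := by rw [hn, hMd]; exact_mod_cast card_le_card hAV
  have hDc : ((V \ A).card : ℝ) = n - M := by
    rw [card_sdiff_of_subset hAV, Nat.cast_sub (card_le_card hAV), hn, hMd]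
  -- link of `v ∈ A` touching `A`
  have hqA : ∀ v ∈ A, G.q A V v ≤ 2 * A.card := by
    intro v hv
    rw [q_eq_sum, mul_comm]
    exact sum_le_card_nsmul _ _ _ fun b hb => hAl' v hv b hb
  have hVun : V = A ∪ (V \ A) := (union_sdiff_of_subset hAV).symm
  -- A nonempty
  have hAne : A.Nonempty := by
    by_contra hne
    rw [not_nonempty_iff_eq_empty] at hne
    obtain ⟨v, hv⟩ := hVne
    have h1 := hd v hv
    have h2 : G.dg V v = 0 := by
      unfold dg; rw [q_eq_sum]
      refine sum_eq_zero fun b hb => ?_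
      have := hM v hv b hb
      rw [hne, card_empty] at this; omega
    rw [h2] at h1; push_cast at h1; nlinarith
  have hMlow : (1 / 3 - 1 / 10 ^ 4) * n ≤ M := by
    obtain ⟨v, hv⟩ := hAne
    have h1 := hd v (hAV hv)
    have h2 : G.dg V v ≤ 2 * A.card + (V \ A).card * A.card := by
      calc G.dg V v = G.q (A ∪ (V \ A)) V v := by rw [← hVun]; rfl
        _ ≤ G.q A V v + G.q (V \ A) V v := q_union_left _ _ _ _
        _ ≤ 2 * A.card + (V \ A).card * A.card := by
          refine add_le_add (hqA v hv) ?_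
          rw [q_eq_sum]
          exact sum_le_card_nsmul _ _ _ fun b hb => hM v (hAV hv) b (sdiff_subset hb)
    have h3 : (G.dg V v : ℝ) ≤ 2 * M + (n - M) * M := by rw [← hDc, hMd]; exact_mod_cast h2
    by_contra! hlt
    nlinarith
  -- choose v
  have hlt : ∃ v ∈ A, (G.lt V v : ℝ) ≤ 8 * n := by
    by_contra! hcon
    have h1 : ∑ v ∈ A, (G.lt V v : ℝ) ≤ 2 * n ^ 2 := by
      have h2 : ∑ v ∈ A, G.lt V v ≤ 2 * V.card ^ 2 :=
        (sum_le_sum_of_subset hAV).trans (sum_lt_le V)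
      rw [hn]; exact_mod_cast h2
    have h2 : A.card • (8 * n) ≤ ∑ v ∈ A, (G.lt V v : ℝ) :=
      card_nsmul_le_sum _ _ _ fun v hv => (hcon v hv).le
    rw [nsmul_eq_mul, ← hMd] at h2
    nlinarith
  obtain ⟨v, hv, hvl⟩ := hlt
  have hvV := hAV hv
  set D := V \ A with hD
  set N : ℕ → Finset ℕ := fun y => D.filter (fun z => G.R v y z ∧ 3 ≤ (G.nb V y z).card) with hNd
  have memN : ∀ y z, z ∈ N y ↔ z ∈ D ∧ G.R v y z ∧ 3 ≤ (G.nb V y z).card := by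
    intro y z; simp [hNd]
  have hDV : D ⊆ V := sdiff_subset
  have hsum : (2 / 9 - 2 / 10 ^ 5) * n ^ 2 ≤ ((∑ y ∈ D, (N y).card : ℕ) : ℝ) := by
    have h1 : G.q D D v ≤ (∑ y ∈ D, (N y).card) + G.lt V v := by
      have e1 : ∑ y ∈ D, (N y).card = ((D ×ˢ D).filter
          (fun p => G.R v p.1 p.2 ∧ 3 ≤ (G.nb V p.1 p.2).card)).card := by
        simp only [hNd, card_filter, sum_product]
      rw [e1]
      unfold q lt
      refine le_trans (card_le_card ?_) (card_union_le _ _)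
      rintro ⟨a, b⟩ h
      simp only [mem_union, mem_filter, mem_product] at h ⊢
      by_cases h3 : 3 ≤ (G.nb V a b).card
      · exact Or.inl ⟨h.1, h.2, h3⟩
      · exact Or.inr ⟨⟨hDV h.1.1, hDV h.1.2⟩, h.2, by omega⟩
    have h2 : G.dg V v ≤ 4 * A.card + G.q D D v := by
      calc G.dg V v = G.q (A ∪ D) V v := by rw [← hVun]; rfl
        _ ≤ G.q A V v + G.q D V v := q_union_left _ _ _ _
        _ ≤ G.q A V v + (G.q D A v + G.q D D v) := by
          have := q_union_right (G := G) D A D v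
          rw [← hVun] at this; omega
        _ ≤ 4 * A.card + G.q D D v := by
          have h3 := hqA v hv
          have h4 : G.q D A v ≤ G.q A V v := by
            rw [q_comm]; exact q_mono subset_rfl hDV _
          omega
    have h3 := hd v hvV
    have h4 : (G.dg V v : ℝ) ≤ 4 * M + ((∑ y ∈ D, (N y).card : ℕ) : ℝ) + G.lt V v := by
      have : G.dg V v ≤ 4 * A.card + (∑ y ∈ D, (N y).card) + G.lt V v := by omega
      rw [hMd]; exact_mod_cast this
    nlinarith
  obtain ⟨S, hSd⟩ : ∃ S : ℝ, S = ((∑ y ∈ D, (N y).card : ℕ) : ℝ) := ⟨_, rfl⟩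
  rw [← hSd] at hsum
  have hSpos : 0 < ∑ y ∈ D, (N y).card := by
    have : (0 : ℝ) < S := lt_of_lt_of_le (by positivity) hsum
    rw [hSd] at this; exact_mod_cast this
  obtain ⟨b, hb, c, hc, hbc⟩ := avg_edge D N (fun y _ z hz => ((memN _ _).1 hz).1) (by
    intro b hb c hc h
    rw [memN] at h ⊢
    refine ⟨hb, G.s23 _ _ _ h.2.1, ?_⟩
    rw [nb_comm]; exact h.2.2) hSpos
  obtain ⟨hcD, hvbc, hbc3⟩ := (memN _ _).1 hc
  have hdisj : Disjoint (N c) (N b) := by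
    rw [disjoint_left]
    intro z hzc hzb
    obtain ⟨hzD, r1, _⟩ := (memN _ _).1 hzc
    obtain ⟨_, r2, _⟩ := (memN _ _).1 hzb
    have : (G.nb V b c).card ≤ 2 := by
      refine card_le_two_of (x := v) (y := z) fun w hw => ?_
      rw [mem_nb] at hw
      exact hF v hvV z (hDV hzD) b (hDV hb) c (hDV hcD) w hw.1 (G.s23 _ _ _ r2) (G.s23 _ _ _ r1)
        (G.ne23 hvbc) hw.2
    omega
  have hsub : ∀ y, N y ⊆ G.nb V v y := fun y z hz => by
    rw [memN] at hz; exact mem_nb.2 ⟨hDV hz.1, hz.2.1⟩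
  have hNA : ∀ y, Disjoint A (N y) := fun y => by
    rw [disjoint_right]; intro z hz; rw [memN, hD, Finset.mem_sdiff] at hz; exact hz.1.2
  have hcb : ((N c).card : ℝ) ≤ M := by
    rw [hMd]; exact_mod_cast (card_le_card (hsub c)).trans (hM v hvV c (hDV hcD))
  have hcc : ((N b).card : ℝ) ≤ M := by
    rw [hMd]; exact_mod_cast (card_le_card (hsub b)).trans (hM v hvV b (hDV hb))
  have hsumD : ((N b).card : ℝ) + (N c).card ≤ n - M := by
    rw [← hDc]
    have : (N c ∪ N b).card ≤ D.card := card_le_card (union_subset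
      (fun z hz => ((memN _ _).1 hz).1) (fun z hz => ((memN _ _).1 hz).1))
    rw [card_union_of_disjoint hdisj] at this
    have : (N b).card + (N c).card ≤ D.card := by omega
    exact_mod_cast this
  have hbc' : 2 * S ≤ (n - M) * (((N b).card : ℝ) + (N c).card) := by
    rw [← hDc, hSd]
    have h9 : ((2 * ∑ y ∈ D, (N y).card : ℕ) : ℝ) ≤ ((D.card * ((N b).card + (N c).card) : ℕ) : ℝ) :=
      Nat.cast_le.2 hbc
    rw [Nat.cast_mul, Nat.cast_mul, Nat.cast_add, Nat.cast_ofNat] at h9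
    exact h9
  set P : ℝ := ((N b).card : ℝ) + (N c).card with hP
  have hP0 : 0 ≤ P := add_nonneg (Nat.cast_nonneg _) (Nat.cast_nonneg _)
  have hMup : M ≤ (1 / 3 + 1 / 10 ^ 4) * n := by
    by_contra! hlt
    have h1 : (n - M) * P ≤ (n - M) * (n - M) := mul_le_mul_of_nonneg_left hsumD (by linarith)
    nlinarith
  have hPlow : (2 / 3 - 17 / 10 ^ 5) * n ≤ P := by
    by_contra! hlt
    have h1 : (n - M) * P ≤ (2 / 3 + 1 / 10 ^ 4) * n * P :=
      mul_le_mul_of_nonneg_right (by linarith) hP0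
    nlinarith
  refine ⟨fun a ha b hb => le_trans ?_ hMup, A, N c, N b, hAV,
    fun z hz => (mem_nb.1 (hsub _ hz)).1, fun z hz => (mem_nb.1 (hsub _ hz)).1, hNA _, hNA _, hdisj,
    hAl, ?_, ?_, hMd ▸ hMup, hcb.trans hMup, hcc.trans hMup, ?_⟩
  · rw [hMd]; exact_mod_cast hM a ha b hb
  · exact fun r hr s hs hrs => hF.light hvV (hDV hcD) (hsub _ hr) (hsub _ hs) hrs
  · exact fun r hr s hs hrs => hF.light hvV (hDV hb) (hsub _ hr) (hsub _ hs) hrs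
  · rw [← hMd]; linarith
end TG

namespace TG
variable {G : TG}

lemma q_decomp {V A B C : Finset ℕ} (hA : A ⊆ V) (hB : B ⊆ V) (hC : C ⊆ V) (v : ℕ) :
    G.dg V v ≤ G.q A A v + G.q B B v + G.q C C v + 2 * (G.q A B v + G.q A C v + G.q B C v)
      + 2 * ((V \ (A ∪ B ∪ C)).card * V.card) := by
  have hW : A ∪ B ∪ C ⊆ V := union_subset (union_subset hA hB) hC
  have hV : V = (A ∪ B ∪ C) ∪ (V \ (A ∪ B ∪ C)) := (union_sdiff_of_subset hW).symm
  set W := A ∪ B ∪ C with hWd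
  set U := V \ W with hU
  have h1 : G.dg V v ≤ G.q W V v + G.q U V v := by
    have := q_union_left (G := G) W U V v
    rwa [← hV] at this
  have h2 : G.q W V v ≤ G.q W W v + G.q W U v := by
    have := q_union_right (G := G) W W U v
    rwa [← hV] at this
  have h3 : G.q U V v ≤ U.card * V.card := q_le _ _ _
  have h4 : G.q W U v ≤ U.card * V.card := by
    rw [q_comm]; exact (q_mono subset_rfl hW _).trans h3
  have h5 := q_union_left (G := G) (A ∪ B) C W v
  have h6 := q_union_left (G := G) A B W v
  have h7 : ∀ X, G.q X W v ≤ G.q X A v + G.q X B v + G.q X C v := fun X => by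
    have h8 := q_union_right (G := G) X (A ∪ B) C v
    have h9 := q_union_right (G := G) X A B v
    rw [← hWd] at h8; omega
  have := h7 A
  have := h7 B
  have := h7 C
  rw [← hWd] at h5
  have := q_comm (G := G) B A v
  have := q_comm (G := G) C A v
  have := q_comm (G := G) C B v
  omega

lemma q_self_le_lt {V B : Finset ℕ} (hB : B ⊆ V)
    (hl : ∀ r ∈ B, ∀ s ∈ B, r ≠ s → (G.nb V r s).card ≤ 2) (v : ℕ) : G.q B B v ≤ G.lt V v := by
  classical
  unfold q lt
  refine card_le_card ?_
  rintro ⟨a, b⟩ h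
  simp only [mem_filter, mem_product] at h ⊢
  exact ⟨⟨hB h.1.1, hB h.1.2⟩, h.2, hl a h.1.1 b h.1.2 (G.ne23 h.2)⟩

/-- typical vertices of `A` have almost complete link in `B × C` -/
lemma typical {V A B C : Finset ℕ} (n : ℝ) (hn : n = V.card) (hN : 10 ^ 9 ≤ n)
    (hd : ∀ v ∈ V, (2 / 9 - 1 / 10 ^ 5) * n ^ 2 ≤ G.dg V v)
    (hA : A ⊆ V) (hB : B ⊆ V) (hC : C ⊆ V)
    (lA : ∀ r ∈ A, ∀ s ∈ A, r ≠ s → (G.nb V r s).card ≤ 2)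
    (lB : ∀ r ∈ B, ∀ s ∈ B, r ≠ s → (G.nb V r s).card ≤ 2)
    (lC : ∀ r ∈ C, ∀ s ∈ C, r ≠ s → (G.nb V r s).card ≤ 2)
    (hU : ((V \ (A ∪ B ∪ C)).card : ℝ) ≤ 3 / 10 ^ 4 * n)
    {a : ℕ} (ha : a ∈ A) (hlt : (G.lt V a : ℝ) ≤ 1 / 10 ^ 4 * n ^ 2) :
    (1 / 9 - 5 / 10 ^ 4) * n ^ 2 ≤ G.q B C a := by
  have h1 := q_decomp (G := G) hA hB hC a
  have h2 := q_self_le_lt hB lB a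
  have h3 := q_self_le_lt hC lC a
  have hqA : G.q A V a ≤ 2 * V.card := by
    rw [q_eq_sum]
    refine le_trans (sum_le_card_nsmul _ _ 2 fun b hb => ?_) ?_
    · by_cases hrs : a = b
      · subst hrs
        have : G.nb V a a = ∅ := by
          ext z; simp only [mem_nb, notMem_empty, iff_false]
          rintro ⟨_, h⟩; exact G.ne12 h rfl
        simp [this]
      · exact lA a ha b hb hrs
    · have := card_le_card hA
      rw [smul_eq_mul]; omega
  have h4 := q_mono (G := G) (subset_refl A) hA a
  have h5 := q_mono (G := G) (subset_refl A) hB a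
  have h6 := q_mono (G := G) (subset_refl A) hC a
  have h7 : G.dg V a ≤ 10 * V.card + 2 * G.lt V a + 2 * G.q B C a
    + 2 * ((V \ (A ∪ B ∪ C)).card * V.card) := by omega
  have h8 : (G.dg V a : ℝ) ≤ 10 * n + 2 * G.lt V a + 2 * G.q B C a
    + 2 * ((V \ (A ∪ B ∪ C)).card * n) := by rw [hn]; exact_mod_cast h7
  have h9 := hd a (hA ha)
  nlinarith

structure Good (G : TG) (V A B C : Finset ℕ) (n : ℝ) : Prop where
  hA : A ⊆ V
  hB : B ⊆ V
  hC : C ⊆ V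
  iA : ∀ r ∈ A, ∀ s ∈ A, ∀ w ∈ V, ¬ G.R r s w
  iB : ∀ r ∈ B, ∀ s ∈ B, ∀ w ∈ V, ¬ G.R r s w
  iC : ∀ r ∈ C, ∀ s ∈ C, ∀ w ∈ V, ¬ G.R r s w
  cA : (A.card : ℝ) ≤ (1 / 3 + 1 / 10 ^ 4) * n
  cB : (B.card : ℝ) ≤ (1 / 3 + 1 / 10 ^ 4) * n
  cC : (C.card : ℝ) ≤ (1 / 3 + 1 / 10 ^ 4) * n
  hU : ((V \ (A ∪ B ∪ C)).card : ℝ) ≤ 4 / 10 ^ 4 * n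
  qA : ∀ a ∈ A, (1 / 9 - 6 / 10 ^ 4) * n ^ 2 ≤ G.q B C a
  qB : ∀ b ∈ B, (1 / 9 - 6 / 10 ^ 4) * n ^ 2 ≤ G.q C A b
  qC : ∀ c ∈ C, (1 / 9 - 6 / 10 ^ 4) * n ^ 2 ≤ G.q A B c

lemma no_edge' {V B C : Finset ℕ} (hF : G.Free V) (n : ℝ) (hn : n = V.card) (hN : 10 ^ 9 ≤ n)
    (hB : B ⊆ V) (hC : C ⊆ V)
    (cB : (B.card : ℝ) ≤ (1 / 3 + 1 / 10 ^ 4) * n)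
    (cC : (C.card : ℝ) ≤ (1 / 3 + 1 / 10 ^ 4) * n) {v v' w : ℕ}
    (hv : v ∈ V) (hv' : v' ∈ V) (hw : w ∈ V)
    (h1 : (1 / 9 - 45 / 10 ^ 3) * n ^ 2 ≤ G.q B C v)
    (h2 : (1 / 9 - 45 / 10 ^ 3) * n ^ 2 ≤ G.q B C v') : ¬ G.R v v' w := by
  refine hF.no_edge hB hC hv hv' hw ?_
  have h3 : (B.card : ℝ) * C.card ≤ ((1 / 3 + 1 / 10 ^ 4) * n) * ((1 / 3 + 1 / 10 ^ 4) * n) :=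
    mul_le_mul cB cC (Nat.cast_nonneg _) (by linarith)
  have h4 : (B.card : ℝ) * C.card + B.card + C.card < G.q B C v + G.q B C v' := by nlinarith
  exact_mod_cast h4

lemma exists_good {V : Finset ℕ} (hF : G.Free V) (n : ℝ) (hn : n = V.card) (hN : 10 ^ 9 ≤ n)
    (hd : ∀ v ∈ V, (2 / 9 - 1 / 10 ^ 5) * n ^ 2 ≤ G.dg V v) :
    ∃ A B C : Finset ℕ, Good G V A B C n := by
  classical
  obtain ⟨_, A, B, C, hA, hB, hC, dAB, dAC, dBC, lA, lB, lC, cA, cB, cC, hs⟩ := core hF n hn hN hd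
  have hU : ((V \ (A ∪ B ∪ C)).card : ℝ) ≤ 3 / 10 ^ 4 * n := by
    have hW : A ∪ B ∪ C ⊆ V := union_subset (union_subset hA hB) hC
    rw [card_sdiff_of_subset hW, Nat.cast_sub (card_le_card hW), card_union_of_disjoint
      (disjoint_union_left.2 ⟨dAC, dBC⟩), card_union_of_disjoint dAB, ← hn]
    push_cast; linarith
  set Z := V.filter (fun v => ¬ (G.lt V v : ℝ) ≤ 1 / 10 ^ 4 * n ^ 2) with hZ
  have hZc : (Z.card : ℝ) ≤ 1 / 10 ^ 4 * n := by
    have h1 : ∑ v ∈ Z, (G.lt V v : ℝ) ≤ 2 * n ^ 2 := by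
      have h2 : ∑ v ∈ Z, G.lt V v ≤ 2 * V.card ^ 2 :=
        (sum_le_sum_of_subset (filter_subset _ _)).trans (sum_lt_le V)
      rw [hn]; exact_mod_cast h2
    have h2 : Z.card • (1 / 10 ^ 4 * n ^ 2) ≤ ∑ v ∈ Z, (G.lt V v : ℝ) :=
      card_nsmul_le_sum _ _ _ fun v hv => by
        rw [hZ, mem_filter] at hv; exact (not_le.1 hv.2).le
    rw [nsmul_eq_mul] at h2
    have h3 : (Z.card : ℝ) * (1 / 10 ^ 4) ≤ 2 := by
      have hn2 : 0 < n ^ 2 := by positivity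
      by_contra! h4
      nlinarith
    linarith
  have hmem : ∀ X : Finset ℕ, X ⊆ V → ∀ a ∈ X \ Z, a ∈ X ∧ (G.lt V a : ℝ) ≤ 1 / 10 ^ 4 * n ^ 2 := by
    intro X hX a ha
    rw [Finset.mem_sdiff, hZ, mem_filter] at ha
    refine ⟨ha.1, ?_⟩
    by_contra h
    exact ha.2 ⟨hX ha.1, h⟩
  have tA : ∀ a ∈ A \ Z, (1 / 9 - 5 / 10 ^ 4) * n ^ 2 ≤ G.q B C a := fun a ha =>
    typical n hn hN hd hA hB hC lA lB lC hU (hmem A hA a ha).1 (hmem A hA a ha).2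
  have tB : ∀ a ∈ B \ Z, (1 / 9 - 5 / 10 ^ 4) * n ^ 2 ≤ G.q C A a := fun a ha =>
    typical n hn hN hd hB hC hA lB lC lA
      (by rw [show B ∪ C ∪ A = A ∪ B ∪ C by rw [union_comm, union_assoc]]; exact hU)
      (hmem B hB a ha).1 (hmem B hB a ha).2
  have tC : ∀ a ∈ C \ Z, (1 / 9 - 5 / 10 ^ 4) * n ^ 2 ≤ G.q A B a := fun a ha =>
    typical n hn hN hd hC hA hB lC lA lB
      (by rw [show C ∪ A ∪ B = A ∪ B ∪ C by rw [union_assoc, union_comm]]; exact hU)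
      (hmem C hC a ha).1 (hmem C hC a ha).2
  have hn2 : 0 < n ^ 2 := by positivity
  have shrink : ∀ X Y : Finset ℕ, X ⊆ V → Y ⊆ V → (X.card : ℝ) ≤ (1 / 3 + 1 / 10 ^ 4) * n →
      (Y.card : ℝ) ≤ (1 / 3 + 1 / 10 ^ 4) * n → ∀ a, (1 / 9 - 5 / 10 ^ 4) * n ^ 2 ≤ G.q X Y a →
      (1 / 9 - 6 / 10 ^ 4) * n ^ 2 ≤ G.q (X \ Z) (Y \ Z) a := by
    intro X Y hX hY cX cY a ha
    have e1 : G.q X Y a ≤ G.q (X \ Z) (Y \ Z) a + Z.card * Y.card + X.card * Z.card := by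
      have h1 : G.q X Y a ≤ G.q ((X \ Z) ∪ Z) Y a := by
        refine q_mono ?_ subset_rfl _
        rw [sdiff_union_self_eq_union]; exact subset_union_left
      have h2 := q_union_left (G := G) (X \ Z) Z Y a
      have h3 : G.q (X \ Z) Y a ≤ G.q (X \ Z) ((Y \ Z) ∪ Z) a := by
        refine q_mono subset_rfl ?_ _
        rw [sdiff_union_self_eq_union]; exact subset_union_left
      have h4 := q_union_right (G := G) (X \ Z) (Y \ Z) Z a
      have h5 := q_le (G := G) Z Y a
      have h6 := (q_mono (G := G) (sdiff_subset (s := X) (t := Z)) (subset_refl Z) a).trans (q_le (G := G) X Z a)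
      omega
    have e2 : (G.q X Y a : ℝ) ≤ G.q (X \ Z) (Y \ Z) a + Z.card * Y.card + X.card * Z.card := by
      exact_mod_cast e1
    have e3 : (Z.card : ℝ) * Y.card ≤ (1 / 10 ^ 4 * n) * ((1 / 3 + 1 / 10 ^ 4) * n) :=
      mul_le_mul hZc cY (Nat.cast_nonneg _) (by linarith)
    have e4 : (X.card : ℝ) * Z.card ≤ ((1 / 3 + 1 / 10 ^ 4) * n) * (1 / 10 ^ 4 * n) :=
      mul_le_mul cX hZc (Nat.cast_nonneg _) (by linarith)
    nlinarith
  have csh : ∀ X : Finset ℕ, (X.card : ℝ) ≤ (1 / 3 + 1 / 10 ^ 4) * n →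
      ((X \ Z).card : ℝ) ≤ (1 / 3 + 1 / 10 ^ 4) * n := fun X h =>
    le_trans (by exact_mod_cast card_le_card sdiff_subset) h
  refine ⟨A \ Z, B \ Z, C \ Z, sdiff_subset.trans hA, sdiff_subset.trans hB, sdiff_subset.trans hC,
    ?_, ?_, ?_, csh A cA, csh B cB, csh C cC, ?_, fun a ha => shrink B C hB hC cB cC a (tA a ha),
    fun a ha => shrink C A hC hA cC cA a (tB a ha), fun a ha => shrink A B hA hB cA cB a (tC a ha)⟩
  · intro r hr s hs w hw
    exact no_edge' hF n hn hN hB hC cB cC (hA (hmem A hA r hr).1) (hA (hmem A hA s hs).1) hw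
      (le_trans (by nlinarith) (tA r hr)) (le_trans (by nlinarith) (tA s hs))
  · intro r hr s hs w hw
    exact no_edge' hF n hn hN hC hA cC cA (hB (hmem B hB r hr).1) (hB (hmem B hB s hs).1) hw
      (le_trans (by nlinarith) (tB r hr)) (le_trans (by nlinarith) (tB s hs))
  · intro r hr s hs w hw
    exact no_edge' hF n hn hN hA hB cA cB (hC (hmem C hC r hr).1) (hC (hmem C hC s hs).1) hw
      (le_trans (by nlinarith) (tC r hr)) (le_trans (by nlinarith) (tC s hs))
  · have h1 : V \ (A \ Z ∪ B \ Z ∪ C \ Z) ⊆ (V \ (A ∪ B ∪ C)) ∪ Z := by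
      intro z; simp only [Finset.mem_sdiff, mem_union]; tauto
    have h2 := (card_le_card h1).trans (card_union_le _ _)
    have h3 : ((V \ (A \ Z ∪ B \ Z ∪ C \ Z)).card : ℝ) ≤ (V \ (A ∪ B ∪ C)).card + Z.card := by
      exact_mod_cast h2
    linarith

/-- if the link of `u` has many `A × C` pairs then it has few pairs touching `B` -/
lemma step4 {V A B C : Finset ℕ} (hF : G.Free V) (n : ℝ) (hn : n = V.card) (hN : 10 ^ 9 ≤ n)
    (hA : A ⊆ V) (hB : B ⊆ V) (hC : C ⊆ V)
    (cA : (A.card : ℝ) ≤ (1 / 3 + 1 / 10 ^ 4) * n)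
    (cB : (B.card : ℝ) ≤ (1 / 3 + 1 / 10 ^ 4) * n)
    (cC : (C.card : ℝ) ≤ (1 / 3 + 1 / 10 ^ 4) * n)
    (qA : ∀ a ∈ A, (1 / 9 - 6 / 10 ^ 4) * n ^ 2 ≤ G.q C B a)
    {u : ℕ} (hu : u ∈ V) (huB : u ∉ B) (hq : 3 / 10 ^ 2 * n ^ 2 ≤ G.q A C u) :
    (G.q B V u : ℝ) ≤ 21 / 10 ^ 3 * n ^ 2 := by
  classical
  have hn2 : 0 < n ^ 2 := by positivity
  -- find a good pair
  have hgood : ∃ a ∈ A, ∃ c ∈ C, G.R u a c ∧ (1 / 3 - 2 / 10 ^ 2) * n ≤ (G.nb B a c).card := by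
    by_contra! hcon
    set bad := (A ×ˢ C).filter (fun p => G.R u p.1 p.2) with hbad
    have h1 : (∑ p ∈ A ×ˢ C, ((G.nb B p.1 p.2).card : ℝ)) ≤
        ∑ p ∈ A ×ˢ C, ((1 / 3 + 1 / 10 ^ 4) * n - if p ∈ bad then 2 / 10 ^ 2 * n else 0) := by
      refine sum_le_sum fun p hp => ?_
      rw [mem_product] at hp
      split_ifs with hb
      · rw [hbad, mem_filter] at hb
        have := hcon p.1 hp.1 p.2 hp.2 hb.2
        linarith
      · have : ((G.nb B p.1 p.2).card : ℝ) ≤ B.card := by exact_mod_cast nb_card_le _ _ _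
        linarith
    have h2 : (∑ p ∈ A ×ˢ C, ((G.nb B p.1 p.2).card : ℝ)) = ∑ a ∈ A, (G.q C B a : ℝ) := by
      rw [sum_product]
      refine sum_congr rfl fun a _ => ?_
      rw [q_eq_sum]; push_cast; rfl
    have h3 : (A.card : ℝ) * ((1 / 9 - 6 / 10 ^ 4) * n ^ 2) ≤ ∑ a ∈ A, (G.q C B a : ℝ) := by
      rw [← nsmul_eq_mul]; exact card_nsmul_le_sum _ _ _ qA
    have h4 : ∑ p ∈ A ×ˢ C, ((1 / 3 + 1 / 10 ^ 4) * n - if p ∈ bad then 2 / 10 ^ 2 * n else 0)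
        = A.card * C.card * ((1 / 3 + 1 / 10 ^ 4) * n) - G.q A C u * (2 / 10 ^ 2 * n) := by
      rw [sum_sub_distrib, sum_const, card_product, ← sum_filter, sum_const, nsmul_eq_mul,
        nsmul_eq_mul]
      congr 2
      · push_cast; rfl
      · rw [filter_mem_eq_inter, inter_eq_right.2 (filter_subset _ _)]; rfl
    rw [h2, h4] at h1
    have hA0 : (0 : ℝ) ≤ A.card := Nat.cast_nonneg _
    have h5 : (A.card : ℝ) * C.card * ((1 / 3 + 1 / 10 ^ 4) * n) ≤
        A.card * (((1 / 3 + 1 / 10 ^ 4) * n) * ((1 / 3 + 1 / 10 ^ 4) * n)) := by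
      rw [mul_assoc]
      exact mul_le_mul_of_nonneg_left (mul_le_mul_of_nonneg_right cC (by linarith)) hA0
    have h6 : 3 / 10 ^ 2 * n ^ 2 * (2 / 10 ^ 2 * n) ≤ G.q A C u * (2 / 10 ^ 2 * n) :=
      mul_le_mul_of_nonneg_right hq (by linarith)
    have h7 : (A.card : ℝ) * (7 / 10 ^ 4 * n ^ 2) ≤ ((1 / 3 + 1 / 10 ^ 4) * n) * (7 / 10 ^ 4 * n ^ 2) :=
      mul_le_mul_of_nonneg_right cA (by positivity)
    have hn3 : 0 < n ^ 3 := by positivity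
    have hAn : 0 ≤ (A.card : ℝ) * n ^ 2 := by positivity
    nlinarith
  obtain ⟨a, ha, c, hc, hR, hg⟩ := hgood
  have hsub : G.nb B a c ⊆ B := fun z hz => (mem_nb.1 hz).1
  have h1 : G.q B V u ≤ G.q (G.nb B a c) V u + G.q (B \ G.nb B a c) V u := by
    have := q_union_left (G := G) (G.nb B a c) (B \ G.nb B a c) V u
    rwa [union_sdiff_of_subset hsub] at this
  have h2 : G.q (G.nb B a c) V u ≤ V.card * 2 := by
    rw [q_eq_sum]
    refine le_trans (sum_le_card_nsmul _ _ 2 fun b hb => ?_) ?_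
    · rw [mem_nb] at hb
      refine card_le_two_of (x := a) (y := c) fun w hw => ?_
      rw [mem_nb] at hw
      refine hF a (hA ha) c (hC hc) u hu b (hB hb.1) w hw.1 (G.rot hR) hb.2 ?_ hw.2
      rintro rfl; exact huB hb.1
    · rw [smul_eq_mul]; exact Nat.mul_le_mul_right _ (card_le_card (hsub.trans hB))
  have h3 : G.q (B \ G.nb B a c) V u ≤ (B.card - (G.nb B a c).card) * V.card := by
    have := q_le (G := G) (B \ G.nb B a c) V u
    rwa [card_sdiff_of_subset hsub] at this
  have h4 : (G.q B V u : ℝ) ≤ n * 2 + (B.card - (G.nb B a c).card) * n := by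
    rw [hn, ← Nat.cast_sub (card_le_card hsub)]
    exact_mod_cast h1.trans (add_le_add h2 h3)
  nlinarith

theorem degree_stable {V : Finset ℕ} (hF : G.Free V) (n : ℝ) (hn : n = V.card) (hN : 10 ^ 9 ≤ n)
    (hd : ∀ v ∈ V, (2 / 9 - 1 / 10 ^ 5) * n ^ 2 ≤ G.dg V v) :
    ∃ f : ℕ → Fin 3, ∀ x ∈ V, ∀ y ∈ V, ∀ z ∈ V, G.R x y z → f x ≠ f y := by
  classical
  obtain ⟨A, B, C, hG⟩ := exists_good hF n hn hN hd
  obtain ⟨hA, hB, hC, iA, iB, iC, cA, cB, cC, hU, qA, qB, qC⟩ := hG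
  have hn2 : 0 < n ^ 2 := by positivity
  have hnn : 10 ^ 9 * n ≤ n ^ 2 := by nlinarith
  have key : ∀ v ∈ V, (1 / 9 - 45 / 10 ^ 3) * n ^ 2 ≤ (G.q B C v : ℝ) ∨
      (1 / 9 - 45 / 10 ^ 3) * n ^ 2 ≤ (G.q C A v : ℝ) ∨
      (1 / 9 - 45 / 10 ^ 3) * n ^ 2 ≤ (G.q A B v : ℝ) := by
    intro v hv
    by_cases vA : v ∈ A
    · left; exact le_trans (by nlinarith) (qA v vA)
    by_cases vB : v ∈ B
    · right; left; exact le_trans (by nlinarith) (qB v vB)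
    by_cases vC : v ∈ C
    · right; right; exact le_trans (by nlinarith) (qC v vC)
    have hz : ∀ X : Finset ℕ, (∀ r ∈ X, ∀ s ∈ X, ∀ w ∈ V, ¬ G.R r s w) → G.q X X v = 0 := by
      intro X hX
      unfold q
      rw [card_eq_zero, filter_eq_empty_iff]
      rintro ⟨a, b⟩ hab hR
      rw [mem_product] at hab
      exact hX a hab.1 b hab.2 v hv (G.rot hR)
    have h1 := q_decomp (G := G) hA hB hC v
    rw [hz A iA, hz B iB, hz C iC] at h1
    have h2 : (G.dg V v : ℝ) ≤ 2 * (G.q A B v + G.q A C v + G.q B C v)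
      + 2 * ((V \ (A ∪ B ∪ C)).card * n) := by
      rw [hn]
      have : G.dg V v ≤ 2 * (G.q A B v + G.q A C v + G.q B C v)
        + 2 * ((V \ (A ∪ B ∪ C)).card * V.card) := by omega
      exact_mod_cast this
    have h3 : ((V \ (A ∪ B ∪ C)).card : ℝ) * n ≤ 4 / 10 ^ 4 * n * n :=
      mul_le_mul_of_nonneg_right hU (by linarith)
    have h4 := hd v hv
    have h5 : (1 / 9 - 5 / 10 ^ 4) * n ^ 2 ≤ G.q A B v + G.q A C v + G.q B C v := by nlinarith
    have mAB : (G.q A B v : ℝ) ≤ G.q A V v := by exact_mod_cast q_mono subset_rfl hB v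
    have mAC : (G.q A C v : ℝ) ≤ G.q A V v := by exact_mod_cast q_mono subset_rfl hC v
    have mBA : (G.q A B v : ℝ) ≤ G.q B V v := by
      rw [q_comm]; exact_mod_cast q_mono subset_rfl hA v
    have mBC : (G.q B C v : ℝ) ≤ G.q B V v := by exact_mod_cast q_mono subset_rfl hC v
    have mCA : (G.q A C v : ℝ) ≤ G.q C V v := by
      rw [q_comm]; exact_mod_cast q_mono subset_rfl hA v
    have mCB : (G.q B C v : ℝ) ≤ G.q C V v := by
      rw [q_comm]; exact_mod_cast q_mono subset_rfl hB v
    rw [q_comm C A]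
    by_cases hAC : 3 / 10 ^ 2 * n ^ 2 ≤ (G.q A C v : ℝ)
    · have := step4 hF n hn hN hA hB hC cA cB cC (fun a ha => by rw [q_comm]; exact qA a ha) hv vB hAC
      right; left; nlinarith
    by_cases hAB : 3 / 10 ^ 2 * n ^ 2 ≤ (G.q A B v : ℝ)
    · have := step4 hF n hn hN hA hC hB cA cC cB qA hv vC hAB
      right; right; nlinarith
    by_cases hBC : 3 / 10 ^ 2 * n ^ 2 ≤ (G.q B C v : ℝ)
    · have := step4 hF n hn hN hB hA hC cB cA cC qB hv vA hBC
      left; nlinarith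
    · exfalso; push Not at hAC hAB hBC; nlinarith
  refine ⟨fun v => if (1 / 9 - 45 / 10 ^ 3) * n ^ 2 ≤ (G.q B C v : ℝ) then 0 else
    if (1 / 9 - 45 / 10 ^ 3) * n ^ 2 ≤ (G.q C A v : ℝ) then 1 else 2, ?_⟩
  intro x hx y hy z hz hR hf
  have kx := key x hx
  have ky := key y hy
  by_cases x1 : (1 / 9 - 45 / 10 ^ 3) * n ^ 2 ≤ (G.q B C x : ℝ) <;>
  by_cases y1 : (1 / 9 - 45 / 10 ^ 3) * n ^ 2 ≤ (G.q B C y : ℝ) <;>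
  by_cases x2 : (1 / 9 - 45 / 10 ^ 3) * n ^ 2 ≤ (G.q C A x : ℝ) <;>
  by_cases y2 : (1 / 9 - 45 / 10 ^ 3) * n ^ 2 ≤ (G.q C A y : ℝ) <;>
  simp only [x1, y1, x2, y2, if_true, if_false, false_or, true_or] at hf kx ky <;>
  first
  | exact no_edge' hF n hn hN hB hC cB cC hx hy hz x1 y1 hR
  | exact no_edge' hF n hn hN hC hA cC cA hx hy hz x2 y2 hR
  | exact no_edge' hF n hn hN hA hB cA cB hx hy hz kx ky hR
  | exact absurd hf (by decide)

end TG


/-- Turán number of the complete balanced 3-partite 3-graph -/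
def TN (m : ℕ) : ℕ := (m / 3) * ((m + 1) / 3) * ((m + 2) / 3)

lemma TN_succ (m : ℕ) : TN (m + 1) = TN m + ((m + 1) / 3) * ((m + 2) / 3) := by
  unfold TN
  have : (m + 1 + 2) / 3 = m / 3 + 1 := by omega
  rw [this]; ring

lemma two_prod {a b X Y : ℕ} (hab : a ≤ b) (hXY : X ≤ Y) (hYX : Y ≤ X + 1) (hs : a + b ≤ X + Y) :
    a * b ≤ X * Y ∧ (a * b = X * Y → 0 < X → a = X ∧ b = Y) := by
  have haX : a ≤ X := by omega
  obtain ⟨d, rfl⟩ := Nat.exists_eq_add_of_le haX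
  obtain ⟨d', rfl⟩ := Nat.exists_eq_add_of_le hXY
  have hb : b ≤ a + d + d + d' := by omega
  have h1 : a * b ≤ a * (a + d + d + d') := Nat.mul_le_mul_left _ hb
  have h2 : (a + d) * (a + d + d') = a * (a + d + d + d') + d * (d + d') := by ring
  refine ⟨by omega, fun he hX => ?_⟩
  have h3 : d * (d + d') = 0 := by omega
  have hd : d = 0 := by
    rcases Nat.mul_eq_zero.1 h3 with h | h <;> omega
  subst hd
  have h4 : a * b = a * (a + 0 + 0 + d') := by omega
  have := Nat.eq_of_mul_eq_mul_left (by omega) h4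
  omega

lemma TN_bound_sorted (m : ℕ) : ∀ a b c : ℕ, a ≤ b → b ≤ c → a + b + c = m → a * b * c ≤ TN m ∧
    (a * b * c = TN m → 3 ≤ m → a = m / 3 ∧ b = (m + 1) / 3 ∧ c = (m + 2) / 3) := by
  induction m using Nat.strong_induction_on with
  | _ m ih =>
  intro a b c hab hbc hm
  rcases Nat.eq_zero_or_pos c with hc | hc
  · subst hc
    have : m = 0 := by omega
    subst this; simp
  obtain ⟨c, rfl⟩ : ∃ c', c = c' + 1 := ⟨c - 1, by omega⟩
  obtain ⟨m, rfl⟩ : ∃ m', m = m' + 1 := ⟨m - 1, by omega⟩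
  have hp := two_prod (a := a) (b := b) (X := (m + 1) / 3) (Y := (m + 2) / 3) hab (by omega) (by omega)
    (by omega)
  have hi : a * b * c ≤ TN m := by
    rcases le_or_gt b c with h | h
    · exact (ih m (by omega) a b c hab h (by omega)).1
    · rcases le_or_gt a c with h' | h'
      · have := (ih m (by omega) a c b h' h.le (by omega)).1
        calc a * b * c = a * c * b := by ring
          _ ≤ _ := this
      · have := (ih m (by omega) c a b h'.le hab (by omega)).1
        calc a * b * c = c * a * b := by ring
          _ ≤ _ := this
  have e : a * b * (c + 1) = a * b * c + a * b := by ring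
  rw [TN_succ, e]
  refine ⟨by omega, fun h h3 => ?_⟩
  have h1 := hp.2 (by omega) (by omega)
  omega

lemma TN_bound (a b c : ℕ) : a * b * c ≤ TN (a + b + c) := by
  rcases le_total a b with h1 | h1 <;> rcases le_total b c with h2 | h2 <;>
    rcases le_total a c with h3 | h3
  · exact (TN_bound_sorted _ a b c h1 h2 rfl).1
  · exact (TN_bound_sorted _ a b c h1 h2 rfl).1
  · have := (TN_bound_sorted (a + b + c) a c b h3 h2 (by omega)).1
    linarith [mul_right_comm a b c]
  · have := (TN_bound_sorted (a + b + c) c a b h3 h1 (by omega)).1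
    nlinarith
  · have := (TN_bound_sorted (a + b + c) b a c h1 h3 (by omega)).1
    nlinarith
  · have := (TN_bound_sorted (a + b + c) b c a h2 h3 (by omega)).1
    nlinarith
  · have := (TN_bound_sorted (a + b + c) c b a h2 h1 (by omega)).1
    nlinarith
  · have := (TN_bound_sorted (a + b + c) c b a h2 h1 (by omega)).1
    nlinarith

lemma TN_le (m : ℕ) : (27 * TN m : ℝ) ≤ (m : ℝ) ^ 3 := by
  have : 27 * TN m ≤ m ^ 3 := by
    unfold TN
    obtain ⟨k, h | h | h⟩ : ∃ k, m = 3 * k ∨ m = 3 * k + 1 ∨ m = 3 * k + 2 := ⟨m / 3, by omega⟩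
    · rw [show m / 3 = k by omega, show (m + 1) / 3 = k by omega, show (m + 2) / 3 = k by omega, h]
      nlinarith
    · rw [show m / 3 = k by omega, show (m + 1) / 3 = k by omega, show (m + 2) / 3 = k + 1 by omega, h]
      nlinarith
    · rw [show m / 3 = k by omega, show (m + 1) / 3 = k + 1 by omega, show (m + 2) / 3 = k + 1 by omega, h]
      nlinarith
  exact_mod_cast this

lemma TN_ge (m : ℕ) : (m : ℝ) ^ 3 ≤ 27 * TN m + 9 * m := by
  have : m ^ 3 ≤ 27 * TN m + 9 * m := by
    unfold TN
    obtain ⟨k, h | h | h⟩ : ∃ k, m = 3 * k ∨ m = 3 * k + 1 ∨ m = 3 * k + 2 := ⟨m / 3, by omega⟩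
    · rw [show m / 3 = k by omega, show (m + 1) / 3 = k by omega, show (m + 2) / 3 = k by omega, h]
      nlinarith
    · rw [show m / 3 = k by omega, show (m + 1) / 3 = k by omega, show (m + 2) / 3 = k + 1 by omega, h]
      nlinarith
    · rw [show m / 3 = k by omega, show (m + 1) / 3 = k + 1 by omega, show (m + 2) / 3 = k + 1 by omega, h]
      nlinarith
  exact_mod_cast this

namespace TG
variable {G : TG}

lemma tot_insert {S : Finset ℕ} {v : ℕ} (hv : v ∉ S) : G.tot (insert v S) = G.tot S + 3 * G.dg S v := by
  classical
  unfold tot dg q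
  simp only [card_filter, sum_product, sum_insert hv]
  have z1 : ∀ z, ¬ G.R v v z := fun z h => G.ne12 h rfl
  have z2 : ∀ z, ¬ G.R v z v := fun z h => G.ne13 h rfl
  have z3 : ∀ z, ¬ G.R z v v := fun z h => G.ne23 h rfl
  have e1 : ∀ x y, (G.R x v y ↔ G.R v x y) := fun x y => ⟨G.s12 _ _ _, G.s12 _ _ _⟩
  have e2 : ∀ x y, (G.R x y v ↔ G.R v x y) := fun x y => ⟨fun h => G.rot' h, fun h => G.rot h⟩
  simp only [z1, z2, z3, e1, e2, if_false, sum_add_distrib, sum_const_zero]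
  ring

lemma dg_insert {S : Finset ℕ} {v : ℕ} (hv : v ∉ S) : G.dg (insert v S) v = G.dg S v := by
  classical
  unfold dg q
  simp only [card_filter, sum_product, sum_insert hv]
  have z1 : ∀ z, ¬ G.R v v z := fun z h => G.ne12 h rfl
  have z2 : ∀ z, ¬ G.R v z v := fun z h => G.ne13 h rfl
  simp only [z1, z2, if_false, sum_add_distrib, sum_const_zero]
  ring

lemma tot_erase {S : Finset ℕ} {v : ℕ} (hv : v ∈ S) : G.tot S = G.tot (S.erase v) + 3 * G.dg S v := by
  conv_lhs => rw [← insert_erase hv]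
  rw [tot_insert (notMem_erase v S), ← dg_insert (notMem_erase v S), insert_erase hv]

lemma tot_le (S : Finset ℕ) : G.tot S ≤ S.card ^ 3 := by
  classical
  refine (card_filter_le _ _).trans ?_
  rw [card_product, card_product]; apply le_of_eq; ring

lemma dg_mono {S S' : Finset ℕ} (h : S ⊆ S') (v) : G.dg S v ≤ G.dg S' v := q_mono h h v

/-- part of a colouring -/
def part (f : ℕ → Fin 3) (V : Finset ℕ) (i : Fin 3) : Finset ℕ := V.filter (fun v => f v = i)

lemma part_card (f : ℕ → Fin 3) (V : Finset ℕ) :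
    (part f V 0).card + (part f V 1).card + (part f V 2).card = V.card := by
  have := card_eq_sum_card_fiberwise (s := V) (t := univ) (f := f) (fun _ _ => mem_univ _)
  rw [this, Fin.sum_univ_three]; rfl

lemma pp_card (f : ℕ → Fin 3) (V : Finset ℕ) :
    ((V ×ˢ V ×ˢ V).filter (fun p => f p.1 ≠ f p.2.1 ∧ f p.1 ≠ f p.2.2 ∧ f p.2.1 ≠ f p.2.2)).card
      ≤ 6 * ((part f V 0).card * (part f V 1).card * (part f V 2).card) := by
  classical
  have hsub : (V ×ˢ V ×ˢ V).filter (fun p => f p.1 ≠ f p.2.1 ∧ f p.1 ≠ f p.2.2 ∧ f p.2.1 ≠ f p.2.2) ⊆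
      ((univ : Finset (Fin 3 × Fin 3 × Fin 3)).filter (fun p => p.1 ≠ p.2.1 ∧ p.1 ≠ p.2.2 ∧ p.2.1 ≠ p.2.2)).biUnion
      (fun p => part f V p.1 ×ˢ part f V p.2.1 ×ˢ part f V p.2.2) := by
    rintro ⟨x, y, z⟩ h
    simp only [mem_filter, mem_product] at h
    simp only [mem_biUnion, mem_filter, mem_univ, true_and, mem_product, part]
    exact ⟨(f x, f y, f z), h.2, ⟨h.1.1, rfl⟩, ⟨h.1.2.1, rfl⟩, ⟨h.1.2.2, rfl⟩⟩
  refine (card_le_card hsub).trans (card_biUnion_le.trans (le_of_eq ?_))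
  rw [show ((univ : Finset (Fin 3 × Fin 3 × Fin 3)).filter (fun p => p.1 ≠ p.2.1 ∧ p.1 ≠ p.2.2 ∧ p.2.1 ≠ p.2.2))
    = {(0,1,2),(0,2,1),(1,0,2),(1,2,0),(2,0,1),(2,1,0)} by decide]
  simp only [card_product]
  rw [sum_insert (by decide), sum_insert (by decide), sum_insert (by decide), sum_insert (by decide),
    sum_insert (by decide), sum_singleton]
  ring

lemma tripartite {V : Finset ℕ} {f : ℕ → Fin 3}
    (hf : ∀ x ∈ V, ∀ y ∈ V, ∀ z ∈ V, G.R x y z → f x ≠ f y) :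
    G.tot V ≤ 6 * TN V.card ∧ (G.tot V = 6 * TN V.card →
      (part f V 0).card * (part f V 1).card * (part f V 2).card = TN V.card ∧
      ∀ x ∈ V, ∀ y ∈ V, ∀ z ∈ V, f x ≠ f y → f x ≠ f z → f y ≠ f z → G.R x y z) := by
  classical
  set PP := (V ×ˢ V ×ˢ V).filter (fun p => f p.1 ≠ f p.2.1 ∧ f p.1 ≠ f p.2.2 ∧ f p.2.1 ≠ f p.2.2) with hPP
  have h1 : PP.card ≤ 6 * ((part f V 0).card * (part f V 1).card * (part f V 2).card) := by
    rw [hPP]; convert pp_card f V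
  have h2 := TN_bound (part f V 0).card (part f V 1).card (part f V 2).card
  rw [part_card] at h2
  have hsub : (V ×ˢ V ×ˢ V).filter (fun p => G.R p.1 p.2.1 p.2.2) ⊆ PP := by
    rintro ⟨x, y, z⟩ h
    simp only [hPP, mem_filter, mem_product] at h ⊢
    obtain ⟨⟨hx, hy, hz⟩, hR⟩ := h
    exact ⟨⟨hx, hy, hz⟩, hf x hx y hy z hz hR, hf x hx z hz y hy (G.s23 _ _ _ hR),
      hf y hy z hz x hx (G.rot hR)⟩
  have h3 : G.tot V ≤ PP.card := card_le_card hsub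
  refine ⟨by omega, fun he => ⟨by omega, ?_⟩⟩
  have h4 := eq_of_subset_of_card_le hsub (show PP.card ≤ G.tot V by omega)
  intro x hx y hy z hz a b c
  have : (x, y, z) ∈ PP := by
    simp only [hPP, mem_filter, mem_product]; exact ⟨⟨hx, hy, hz⟩, a, b, c⟩
  rw [← h4, mem_filter] at this
  exact this.2

lemma mindeg_or {V : Finset ℕ} (hF : G.Free V) (hN : 10 ^ 9 ≤ V.card) :
    (∃ f : ℕ → Fin 3, ∀ x ∈ V, ∀ y ∈ V, ∀ z ∈ V, G.R x y z → f x ≠ f y) ∨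
    ∃ v ∈ V, G.tot V + 1 + 6 * TN (V.card - 1) ≤ G.tot (V.erase v) + 6 * TN V.card := by
  by_cases h : ∀ v ∈ V, 2 * ((V.card / 3) * ((V.card + 1) / 3)) ≤ G.dg V v
  · left
    have hN' : (10 : ℝ) ^ 9 ≤ V.card := by exact_mod_cast hN
    refine degree_stable hF V.card rfl hN' fun v hv => ?_
    have h1 : ((2 * ((V.card / 3) * ((V.card + 1) / 3)) : ℕ) : ℝ) ≤ G.dg V v := by exact_mod_cast h v hv
    refine le_trans ?_ h1
    generalize V.card = n at hN' ⊢
    have h2 : (n : ℝ) ≤ 3 * ((n / 3 : ℕ) : ℝ) + 2 := by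
      have : n ≤ 3 * (n / 3) + 2 := by omega
      exact_mod_cast this
    have h3 : (n : ℝ) ≤ 3 * (((n + 1) / 3 : ℕ) : ℝ) + 2 := by
      have : n ≤ 3 * ((n + 1) / 3) + 2 := by omega
      exact_mod_cast this
    push_cast
    have h4 : ((n : ℝ) - 2) / 3 * (((n : ℝ) - 2) / 3) ≤ ((n / 3 : ℕ) : ℝ) * (((n + 1) / 3 : ℕ) : ℝ) :=
      mul_le_mul (by linarith) (by linarith) (by linarith) (Nat.cast_nonneg _)
    nlinarith
  · right
    push Not at h
    obtain ⟨v, hv, h⟩ := h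
    refine ⟨v, hv, ?_⟩
    have h1 := tot_erase (G := G) hv
    obtain ⟨m, hm⟩ : ∃ m, V.card = m + 1 := ⟨V.card - 1, by omega⟩
    have h2 := TN_succ m
    rw [hm] at h ⊢
    rw [Nat.add_sub_cancel]
    have : (m + 1 + 1) / 3 = (m + 2) / 3 := rfl
    rw [this] at h
    omega

lemma ff_aux (K : ℕ) (hK : (10 ^ 9) ^ 3 ≤ K) (d : ℕ) : ∀ V : Finset ℕ, V.card = 10 ^ 9 + d → G.Free V →
    G.tot V ≤ 6 * TN V.card + (K - d) := by
  induction d with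
  | zero =>
    intro V hV _
    have := tot_le (G := G) V
    rw [hV, Nat.add_zero] at this
    omega
  | succ d ih =>
    intro V hV hF
    rcases mindeg_or hF (by omega) with ⟨f, hf⟩ | ⟨v, hv, h⟩
    · have := (tripartite hf).1; omega
    · have hc : (V.erase v).card = V.card - 1 := card_erase_of_mem hv
      have := ih (V.erase v) (by omega) (hF.mono (erase_subset _ _))
      rw [hc] at this
      omega

theorem ff : ∃ N : ℕ, ∀ (G : TG) (V : Finset ℕ), N ≤ V.card → G.Free V → G.tot V ≤ 6 * TN V.card ∧
    (G.tot V = 6 * TN V.card → ∃ f : ℕ → Fin 3,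
      (part f V 0).card * (part f V 1).card * (part f V 2).card = TN V.card ∧
      ∀ x ∈ V, ∀ y ∈ V, ∀ z ∈ V, G.R x y z ↔ (f x ≠ f y ∧ f x ≠ f z ∧ f y ≠ f z)) := by
  obtain ⟨K, hK⟩ : ∃ K : ℕ, K = (10 ^ 9) ^ 3 := ⟨_, rfl⟩
  have h1 : ∀ (G : TG) (V : Finset ℕ), 10 ^ 9 + K ≤ V.card → G.Free V → G.tot V ≤ 6 * TN V.card := by
    intro G V hV hF
    have := ff_aux (G := G) K hK.ge (V.card - 10 ^ 9) V (by omega) hF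
    omega
  refine ⟨10 ^ 9 + K + 1, fun G V hV hF => ⟨h1 G V (by omega) hF, fun he => ?_⟩⟩
  rcases mindeg_or hF (by omega) with ⟨f, hf⟩ | ⟨v, hv, h⟩
  · obtain ⟨a, b⟩ := (tripartite hf).2 he
    refine ⟨f, a, fun x hx y hy z hz => ⟨fun hR => ⟨hf x hx y hy z hz hR,
      hf x hx z hz y hy (G.s23 _ _ _ hR), hf y hy z hz x hx (G.rot hR)⟩,
      fun h => b x hx y hy z hz h.1 h.2.1 h.2.2⟩⟩
  · have hc : (V.erase v).card = V.card - 1 := card_erase_of_mem hv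
    have := h1 G (V.erase v) (by omega) (hF.mono (erase_subset _ _))
    rw [hc] at this
    omega
end TG

namespace TG
variable {G : TG}

lemma dg_sub {S V : Finset ℕ} (h : S ⊆ V) (v : ℕ) : G.dg V v + 2 * S.card * V.card ≤ G.dg S v + 2 * V.card * V.card := by
  have h1 : G.dg V v ≤ G.q S V v + G.q (V \ S) V v := by
    have := q_union_left (G := G) S (V \ S) V v
    rwa [union_sdiff_of_subset h] at this
  have h2 : G.q S V v ≤ G.q S S v + G.q S (V \ S) v := by
    have := q_union_right (G := G) S S (V \ S) v
    rwa [union_sdiff_of_subset h] at this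
  have h3 := q_le (G := G) (V \ S) V v
  have h4 := q_le (G := G) S (V \ S) v
  have h5 : (V \ S).card + S.card = V.card := card_sdiff_add_card_eq_card h
  have h6 : S.card ≤ V.card := card_le_card h
  have h7 : G.q S S v = G.dg S v := rfl
  nlinarith

theorem bdd : ∃ N : ℕ, ∀ (G : TG) (V : Finset ℕ) (v : ℕ), N ≤ V.card → v ∈ V → G.Free V →
    (2 / 9 - 1 / 10 ^ 8) * (V.card : ℝ) ^ 3 ≤ G.tot V → (G.dg V v : ℝ) ≤ 0.35 * (V.card : ℝ) ^ 2 := by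
  classical
  obtain ⟨N, hN⟩ := ff
  refine ⟨N * 10 ^ 9 + 10 ^ 10, fun G V v hV hv hF ht => ?_⟩
  by_contra hcon
  push Not at hcon
  obtain ⟨S, hS, hmax⟩ := exists_max_image (V.powerset.filter (fun S => v ∈ S))
    (fun S => (G.tot S : ℝ) - (2 / 9 - 4 / 10 ^ 6) * (S.card : ℝ) ^ 3) ⟨V, by simp [hv]⟩
  simp only [mem_filter, mem_powerset] at hS hmax
  obtain ⟨hSV, hvS⟩ := hS
  have h1 := hmax V ⟨Subset.refl _, hv⟩
  obtain ⟨n, hn⟩ : ∃ n : ℝ, n = V.card := ⟨_, rfl⟩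
  obtain ⟨m, hm⟩ : ∃ m : ℝ, m = S.card := ⟨_, rfl⟩
  have hmn : m ≤ n := by rw [hm, hn]; exact_mod_cast card_le_card hSV
  have hm0 : 0 ≤ m := by rw [hm]; positivity
  have hn1 : (N : ℝ) * 10 ^ 9 + 10 ^ 10 ≤ n := by rw [hn]; exact_mod_cast hV
  have hN0 : (0 : ℝ) ≤ N := Nat.cast_nonneg _
  have hn10 : (10 : ℝ) ^ 10 ≤ n := by nlinarith
  rw [← hn] at ht hcon
  rw [← hn, ← hm] at h1
  have hn3 : 0 < n ^ 3 := by positivity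
  have hm3 : 0 ≤ m ^ 3 := by positivity
  have hNm : N ≤ S.card := by
    by_contra hlt
    push Not at hlt
    have h2 : (G.tot S : ℝ) ≤ m ^ 3 := by rw [hm]; exact_mod_cast tot_le S
    have h3 : m ≤ N := by rw [hm]; exact_mod_cast hlt.le
    have h4 : m ≤ n / 10 ^ 9 := by
      rw [le_div_iff₀ (by norm_num)]; nlinarith
    have h5 : m ^ 3 ≤ (n / 10 ^ 9) ^ 3 := by gcongr
    have h6 : (n / 10 ^ 9) ^ 3 = n ^ 3 / 10 ^ 27 := by rw [div_pow]; norm_num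
    rw [h6] at h5
    have h7 : n ^ 3 / 10 ^ 27 ≤ n ^ 3 / 10 ^ 10 := by gcongr <;> norm_num
    linarith
  have h2 : (G.tot S : ℝ) ≤ 6 * TN S.card := by
    exact_mod_cast (hN G S hNm (hF.mono hSV)).1
  have h3 := TN_le S.card
  rw [← hm] at h3
  have h4 : (1 - 1 / 400) * n ^ 3 ≤ m ^ 3 := by linarith
  have h5 : 0.999 * n ≤ m := by
    by_contra hlt
    push Not at hlt
    have : m ^ 3 ≤ (0.999 * n) ^ 3 := by gcongr
    rw [mul_pow] at this
    norm_num at this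
    linarith
  have hm9 : (10 : ℝ) ^ 9 ≤ m := by linarith
  have h6 : (G.dg V v : ℝ) + 2 * m * n ≤ G.dg S v + 2 * n * n := by
    rw [hm, hn]; exact_mod_cast dg_sub hSV v
  have h7 : 0.348 * n ^ 2 ≤ G.dg S v := by nlinarith
  have hm2 : m ^ 2 ≤ n ^ 2 := by gcongr
  have hc := core (hF.mono hSV) m hm hm9 (fun w hw => by
    by_cases hwv : w = v
    · subst hwv; nlinarith
    · have h8 := hmax (S.erase w) ⟨(erase_subset _ _).trans hSV, mem_erase.2 ⟨fun h => hwv h.symm, hvS⟩⟩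
      have h9 : ((S.erase w).card : ℝ) = m - 1 := by
        rw [card_erase_of_mem hw, hm, Nat.cast_sub (card_pos.2 ⟨w, hw⟩)]; simp
      have h10 : (G.tot S : ℝ) = G.tot (S.erase w) + 3 * G.dg S w := by exact_mod_cast tot_erase hw
      rw [h9, ← hm] at h8
      nlinarith)
  have h8 : (G.dg S v : ℝ) ≤ m * ((1 / 3 + 1 / 10 ^ 4) * m) := by
    have : G.dg S v = ∑ b ∈ S, (G.nb S v b).card := q_eq_sum _ _ _
    rw [this]; push_cast
    refine (sum_le_card_nsmul _ _ _ fun b hb => hc.1 v hvS b hb).trans ?_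
    rw [nsmul_eq_mul, hm]
  nlinarith
end TG

namespace TG
variable {G : TG}

def Cop (G : TG) (S : Finset ℕ) : Prop := S.card = 5 ∧ ¬ G.Free S

lemma exists_cop {V : Finset ℕ} (h : ¬ G.Free V) : ∃ S ⊆ V, G.Cop S := by
  classical
  unfold Free at h
  push Not at h
  obtain ⟨p, hp, q, hq, r, hr, s, hs, w, hw, h1, h2, h3, h4, h5, h6⟩ := h
  refine ⟨{p, q, r, s, w}, ?_, ?_, ?_⟩
  · intro x hx
    simp only [mem_insert, mem_singleton] at hx
    rcases hx with rfl | rfl | rfl | rfl | rfl <;> assumption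
  · have := G.ne12 h1
    have := G.ne13 h1
    have := G.ne23 h1
    have := G.ne13 h2
    have := G.ne23 h2
    have := G.ne13 h4
    have := G.ne23 h4
    rw [card_insert_of_notMem, card_insert_of_notMem, card_insert_of_notMem, card_insert_of_notMem,
      card_singleton] <;> simp only [mem_insert, mem_singleton, not_or] <;> tauto
  · intro hF
    rcases hF p (by simp) q (by simp) r (by simp) s (by simp) w (by simp) h1 h2 h3 h4 with h | h
    · exact h5 h
    · exact h6 h

/-- disjoint unions of `k` copies -/
inductive PK (G : TG) : ℕ → Finset ℕ → Prop
  | nil : PK G 0 ∅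
  | cons {k : ℕ} {S Y : Finset ℕ} : G.Cop S → PK G k Y → Disjoint S Y → PK G (k + 1) (S ∪ Y)

lemma PK.card {k : ℕ} {X : Finset ℕ} (h : G.PK k X) : X.card = 5 * k := by
  induction h with
  | nil => rfl
  | cons hS _ hd ih => rw [card_union_of_disjoint hd, hS.1, ih]; ring

lemma greedy {V : Finset ℕ} {t : ℕ} {P : ℕ → Prop}
    (step : ∀ Y ⊆ V, Y.card ≤ 5 * (t + 1) → ∀ b ∈ V, b ∉ Y → P b → ¬ G.Free (V \ Y))
    (D : Finset ℕ) : D ⊆ V → (∀ d ∈ D, P d) → ∀ (j : ℕ) (X : Finset ℕ), X ⊆ V → G.PK j X → Disjoint X D →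
      j + D.card ≤ t + 1 → ∃ X' ⊆ V, G.PK (j + D.card) X' := by
  classical
  induction D using Finset.induction_on with
  | empty => intro _ _ j X hX hP _ _; exact ⟨X, hX, by simpa using hP⟩
  | insert b D hb ih =>
    intro hD hPD j X hX hPK hdis hcard
    rw [card_insert_of_notMem hb] at hcard ⊢
    have hbX : b ∉ X := fun h => (disjoint_left.1 hdis h) (mem_insert_self _ _)
    have hDX : Disjoint X D := hdis.mono_right (subset_insert _ _)
    have hDV : D ⊆ V := (subset_insert _ _).trans hD
    obtain ⟨S, hS, hcop⟩ := exists_cop (step (X ∪ D) (union_subset hX hDV)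
      (by rw [card_union_of_disjoint hDX, hPK.card]; omega) b (hD (mem_insert_self _ _))
      (by simp [hbX, hb]) (hPD b (mem_insert_self _ _)))
    have hd1 : Disjoint S (X ∪ D) := disjoint_of_subset_left hS sdiff_disjoint
    rw [disjoint_union_right] at hd1
    obtain ⟨X', h1, h2⟩ := ih hDV (fun d hd => hPD d (mem_insert_of_mem hd)) (j + 1) (S ∪ X)
      (union_subset (hS.trans sdiff_subset) hX) (PK.cons hcop hPK hd1.1)
      (disjoint_union_left.2 ⟨hd1.2, hDX⟩) (by omega)
    exact ⟨X', h1, by convert h2 using 1; omega⟩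

lemma tot_sdiff {U : Finset ℕ} {d : ℝ} (X : Finset ℕ) : X ⊆ U → (∀ x ∈ X, (G.dg U x : ℝ) ≤ d) →
    (G.tot U : ℝ) ≤ G.tot (U \ X) + 3 * X.card * d := by
  classical
  induction X using Finset.induction_on with
  | empty => intro _ _; simp
  | insert b X hb ih =>
    intro hX hd
    have h1 := ih ((subset_insert _ _).trans hX) fun x hx => hd x (mem_insert_of_mem hx)
    have hbU : b ∈ U \ X := Finset.mem_sdiff.2 ⟨hX (mem_insert_self _ _), hb⟩
    have h2 : (G.tot (U \ X) : ℝ) = G.tot ((U \ X).erase b) + 3 * G.dg (U \ X) b := by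
      exact_mod_cast tot_erase hbU
    have h3 : (G.dg (U \ X) b : ℝ) ≤ G.dg U b := by exact_mod_cast dg_mono sdiff_subset b
    have h4 := hd b (mem_insert_self _ _)
    have h5 : (U \ X).erase b = U \ insert b X := by ext; simp; tauto
    rw [h5] at h2
    rw [card_insert_of_notMem hb]; push_cast
    linarith

/-- ordered triples of distinct elements -/
def KK : TG where
  R x y z := x ≠ y ∧ x ≠ z ∧ y ≠ z
  s12 _ _ _ h := ⟨h.1.symm, h.2.2, h.2.1⟩
  s23 _ _ _ h := ⟨h.2.1, h.1, h.2.2.symm⟩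
  ne _ _ _ h := h.1

def d3 (m : ℕ) : ℕ := m * (m - 1) * (m - 2)

lemma d3_cast (m : ℕ) : (d3 m : ℝ) = m * (m - 1) * (m - 2) := by
  match m with
  | 0 => simp [d3]
  | 1 => simp [d3]
  | m + 2 => simp only [d3, Nat.add_sub_cancel, show m + 2 - 1 = m + 1 by omega]; push_cast; ring

lemma KK_dg (S : Finset ℕ) (v : ℕ) (hv : v ∉ S) : KK.dg S v = S.card * (S.card - 1) := by
  classical
  have : KK.dg S v = S.offDiag.card := by
    unfold dg q
    congr 1
    ext ⟨x, y⟩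
    rw [mem_filter, mem_product, mem_offDiag]; change (x ∈ S ∧ y ∈ S) ∧ (v ≠ x ∧ v ≠ y ∧ x ≠ y) ↔ x ∈ S ∧ y ∈ S ∧ x ≠ y
    constructor
    · rintro ⟨⟨a, b⟩, c⟩; exact ⟨a, b, c.2.2⟩
    · rintro ⟨a, b, c⟩; exact ⟨⟨a, b⟩, fun h => hv (h ▸ a), fun h => hv (h ▸ b), c⟩
  rw [this, offDiag_card, Nat.mul_sub_one]

lemma KK_tot (S : Finset ℕ) : KK.tot S = d3 S.card := by
  classical
  induction S using Finset.induction_on with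
  | empty => simp [tot, d3]
  | insert b S hb ih =>
    rw [tot_insert hb, ih, KK_dg S b hb, card_insert_of_notMem hb]
    generalize S.card = m
    match m with
    | 0 => simp [d3]
    | 1 => simp [d3]
    | m + 2 => simp only [d3, Nat.add_sub_cancel, show m + 2 - 1 = m + 1 by omega, show m + 2 + 1 - 2 = m + 1 by omega]; ring

lemma cocount {V A : Finset ℕ} (_hA : A ⊆ V) :
    G.tot V + d3 (V \ A).card ≤ d3 V.card + G.tot (V \ A) ∧
    (G.tot V + d3 (V \ A).card = d3 V.card + G.tot (V \ A) →
      ∀ x ∈ V, ∀ y ∈ V, ∀ z ∈ V, x ≠ y → x ≠ z → y ≠ z → (x ∈ A ∨ y ∈ A ∨ z ∈ A) → G.R x y z) := by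
  classical
  rw [← KK_tot, ← KK_tot]
  unfold tot
  set a := (V ×ˢ V ×ˢ V).filter (fun p => G.R p.1 p.2.1 p.2.2)
  set b := ((V \ A) ×ˢ (V \ A) ×ˢ (V \ A)).filter (fun p => KK.R p.1 p.2.1 p.2.2)
  set c := (V ×ˢ V ×ˢ V).filter (fun p => KK.R p.1 p.2.1 p.2.2)
  set d := ((V \ A) ×ˢ (V \ A) ×ˢ (V \ A)).filter (fun p => G.R p.1 p.2.1 p.2.2)
  have h1 : a ∪ b ⊆ c := by
    rintro ⟨x, y, z⟩ h
    simp only [a, b, c, mem_union, mem_filter, mem_product, Finset.mem_sdiff] at h ⊢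
    rcases h with h | h
    · exact ⟨h.1, G.ne12 h.2, G.ne13 h.2, G.ne23 h.2⟩
    · exact ⟨⟨h.1.1.1, h.1.2.1.1, h.1.2.2.1⟩, h.2⟩
  have h2 : a ∩ b ⊆ d := by
    rintro ⟨x, y, z⟩ h
    simp only [a, b, d, mem_inter, mem_filter] at h ⊢
    exact ⟨h.2.1, h.1.2⟩
  have h3 := card_union_add_card_inter a b
  have h4 := card_le_card h1
  have h5 := card_le_card h2
  refine ⟨by omega, fun he x hx y hy z hz n1 n2 n3 hor => ?_⟩
  have h6 := eq_of_subset_of_card_le h1 (by omega)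
  have : (x, y, z) ∈ c := by
    simp only [c, mem_filter, mem_product]; exact ⟨⟨hx, hy, hz⟩, n1, n2, n3⟩
  rw [← h6] at this
  simp only [a, b, mem_union, mem_filter, mem_product, Finset.mem_sdiff] at this
  tauto

theorem step_lemma : ∃ N : ℕ, ∀ (G : TG) (V : Finset ℕ), N ≤ V.card →
    (2 / 9 - 1 / 10 ^ 9) * (V.card : ℝ) ^ 3 ≤ G.tot V →
    ∀ Y ⊆ V, (Y.card : ℝ) ≤ 1 / 10 ^ 9 * V.card → ∀ b ∈ V, b ∉ Y → 0.36 * (V.card : ℝ) ^ 2 ≤ G.dg V b →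
    ¬ G.Free (V \ Y) := by
  obtain ⟨N, hN⟩ := bdd
  refine ⟨2 * N, fun G V hV ht Y hY hYc b hb hbY hd hF => ?_⟩
  have hc : (V \ Y).card + Y.card = V.card := card_sdiff_add_card_eq_card hY
  obtain ⟨n, hn⟩ : ∃ n : ℝ, n = V.card := ⟨_, rfl⟩
  obtain ⟨m, hm⟩ : ∃ m : ℝ, m = (V \ Y).card := ⟨_, rfl⟩
  obtain ⟨y, hy⟩ : ∃ y : ℝ, y = Y.card := ⟨_, rfl⟩
  have hc' : m + y = n := by rw [hm, hn, hy]; exact_mod_cast hc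
  have hm0 : 0 ≤ m := by rw [hm]; positivity
  have hy0 : 0 ≤ y := by rw [hy]; positivity
  have hNm : N ≤ (V \ Y).card := by
    have : (Y.card : ℝ) ≤ ((V \ Y).card : ℝ) := by rw [← hy, ← hm]; rw [← hy, ← hn] at hYc; linarith
    have : Y.card ≤ (V \ Y).card := by exact_mod_cast this
    omega
  have h1 := hN G (V \ Y) b hNm (Finset.mem_sdiff.2 ⟨hb, hbY⟩) hF
  have h2 := tot_sdiff (G := G) (U := V) (d := n ^ 2) Y hY fun x _ => by
    have := q_le (G := G) V V x
    rw [hn, sq]; exact_mod_cast this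
  have h3 : (G.dg V b : ℝ) + 2 * m * n ≤ G.dg (V \ Y) b + 2 * n * n := by
    rw [hm, hn]; exact_mod_cast dg_sub sdiff_subset b
  rw [← hn] at ht hYc hd
  rw [← hm] at h1
  rw [← hy] at h2 hYc
  have hm3 : m ^ 3 ≤ n ^ 3 := by gcongr; linarith
  have hn0 : 0 ≤ n := by linarith
  have hyn : y * n ^ 2 ≤ 1 / 10 ^ 9 * n ^ 3 := by
    have : y * n ^ 2 ≤ (1 / 10 ^ 9 * n) * n ^ 2 := by gcongr
    linarith [this, show (1 / 10 ^ 9 * n) * n ^ 2 = 1 / 10 ^ 9 * n ^ 3 by ring]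
  have h4 := h1 (by nlinarith)
  have hm2 : m ^ 2 ≤ n ^ 2 := by gcongr; linarith
  have hyn2 : y * n ≤ 1 / 10 ^ 9 * n * n := by gcongr
  have h5 : 0.36 * n ^ 2 - 2 * (y * n) ≤ 0.35 * m ^ 2 := by
    have : m * n = n * n - y * n := by rw [← hc']; ring
    nlinarith
  have hnpos : n ≤ 0 := by nlinarith
  have : V.card = 0 := by
    have h : (V.card : ℝ) ≤ 0 := by rw [← hn]; exact hnpos
    exact_mod_cast le_antisymm h (Nat.cast_nonneg _)
  rw [card_eq_zero] at this
  subst this; simp at hb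
end TG

namespace TG
variable {G : TG}

lemma num (n a b w D k : ℝ) (hb : b = a - D) (hw : w = a - 5 * k) (han : a ≤ n) (hk0 : 0 ≤ k) (hkD : k ≤ D)
    (hD : 1 ≤ D) (hb1 : 0.999 * n ≤ b) (hw1 : 0.999 * n ≤ w) (hn : 10 ^ 9 ≤ n) :
    2 / 9 * w ^ 3 + 5.4 * k * n ^ 2 + 2 * n < a * (a - 1) * (a - 2) - b * (b - 1) * (b - 2) + 2 / 9 * b ^ 3 := by
  have hn0 : 0 ≤ n := by linarith
  have h9 : 0 ≤ 0.999 * n := by positivity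
  have ha1 : 0.999 * n ≤ a := by linarith
  have b2 : (0.999 * n) * (0.999 * n) ≤ b * b := mul_le_mul hb1 hb1 h9 (by linarith)
  have a2 : (0.999 * n) * (0.999 * n) ≤ a * a := mul_le_mul ha1 ha1 h9 (by linarith)
  have ab : (0.999 * n) * (0.999 * n) ≤ a * b := mul_le_mul ha1 hb1 h9 (by linarith)
  have w2 : (0.999 * n) * (0.999 * n) ≤ w * w := mul_le_mul hw1 hw1 h9 (by linarith)
  have bw : (0.999 * n) * (0.999 * n) ≤ b * w := mul_le_mul hb1 hw1 h9 (by linarith)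
  have hbn : b ≤ n := by linarith
  have hwn : w ≤ n := by linarith
  have b2' : b * b ≤ n * n := mul_le_mul hbn hbn (by linarith) hn0
  have w2' : w * w ≤ n * n := mul_le_mul hwn hwn (by linarith) hn0
  have bw' : b * w ≤ n * n := mul_le_mul hbn hwn (by linarith) hn0
  have hnn : 10 ^ 9 * n ≤ n * n := mul_le_mul_of_nonneg_right hn hn0
  have e1 : a * (a - 1) * (a - 2) - b * (b - 1) * (b - 2) = D * (a * a + a * b + b * b - 3 * (a + b) + 2) := by
    rw [hb]; ring
  have e2 : b ^ 3 - w ^ 3 = (5 * k - D) * (b * b + b * w + w * w) := by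
    rw [show 5 * k - D = b - w by rw [hb, hw]; ring]; ring
  have f1 : D * (2.99 * (n * n)) ≤ D * (a * a + a * b + b * b - 3 * (a + b) + 2) :=
    mul_le_mul_of_nonneg_left (by linarith) (by linarith)
  have f2 : k * (2.99 * (n * n)) ≤ k * (b * b + b * w + w * w) :=
    mul_le_mul_of_nonneg_left (by linarith) hk0
  have f3 : D * (b * b + b * w + w * w) ≤ D * (3 * (n * n)) :=
    mul_le_mul_of_nonneg_left (by linarith) (by linarith)
  have f4 : k * (n * n) ≤ D * (n * n) := mul_le_mul_of_nonneg_right hkD (by positivity)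
  have f5 : 1 * (n * n) ≤ D * (n * n) := mul_le_mul_of_nonneg_right hD (by positivity)
  have e3 : 5.4 * k * n ^ 2 = 5.4 * (k * (n * n)) := by ring
  rw [e1, e3]
  have e4 : 2 / 9 * b ^ 3 = 2 / 9 * w ^ 3 + 2 / 9 * (5 * (k * (b * b + b * w + w * w)) - D * (b * b + b * w + w * w)) := by
    linear_combination 2 / 9 * e2
  rw [e4]
  linarith

theorem main : ∃ N : ℕ, ∀ (G : TG) (V : Finset ℕ) (t : ℕ), N ≤ V.card → (t : ℝ) ≤ 1 / 10 ^ 10 * V.card →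
    (¬ ∃ X ⊆ V, G.PK (t + 1) X) → d3 V.card + 6 * TN (V.card - t) ≤ G.tot V + d3 (V.card - t) →
    d3 V.card + 6 * TN (V.card - t) = G.tot V + d3 (V.card - t) ∧
    ∃ A ⊆ V, A.card = t ∧ (∀ x ∈ V, ∀ y ∈ V, ∀ z ∈ V, x ≠ y → x ≠ z → y ≠ z →
      (x ∈ A ∨ y ∈ A ∨ z ∈ A) → G.R x y z) ∧
    ∃ f : ℕ → Fin 3,
      (part f (V \ A) 0).card * (part f (V \ A) 1).card * (part f (V \ A) 2).card = TN (V.card - t) ∧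
      ∀ x ∈ V \ A, ∀ y ∈ V \ A, ∀ z ∈ V \ A, G.R x y z ↔ (f x ≠ f y ∧ f x ≠ f z ∧ f y ≠ f z) := by
  classical
  obtain ⟨N1, hN1⟩ := ff
  obtain ⟨N2, hN2⟩ := step_lemma
  refine ⟨2 * N1 + N2 + 10 ^ 11, fun G V t hV ht hno hge => ?_⟩
  obtain ⟨n, hn⟩ : ∃ n : ℝ, n = V.card := ⟨_, rfl⟩
  have hn11 : (10 : ℝ) ^ 11 ≤ n := by
    rw [hn]; exact_mod_cast (by omega : 10 ^ 11 ≤ V.card)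
  have htV : t ≤ V.card := by
    have : (t : ℝ) ≤ V.card := by rw [← hn] at ht ⊢; linarith
    exact_mod_cast this
  have hbt : ((V.card - t : ℕ) : ℝ) = n - t := by rw [Nat.cast_sub htV, hn]
  have ht0 : (0 : ℝ) ≤ t := Nat.cast_nonneg _
  rw [← hn] at ht
  have hTNge := TN_ge (V.card - t)
  rw [hbt] at hTNge
  have hge' : n * (n - 1) * (n - 2) + 6 * TN (V.card - t) ≤ G.tot V + (n - t) * (n - t - 1) * (n - t - 2) := by
    have : ((d3 V.card + 6 * TN (V.card - t) : ℕ) : ℝ) ≤ ((G.tot V + d3 (V.card - t) : ℕ) : ℝ) := by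
      exact_mod_cast hge
    push_cast at this
    rw [d3_cast, d3_cast, hbt, ← hn] at this
    exact this
  have hdense : (2 / 9 - 1 / 10 ^ 9) * n ^ 3 ≤ G.tot V := by
    have h1 : (n - t) * (n - t - 1) * (n - t - 2) ≤ n * (n - 1) * (n - 2) := by
      have h0 : 0 ≤ n - t - 2 := by linarith
      have h1 : (n - t) * (n - t - 1) ≤ n * (n - 1) :=
        mul_le_mul (by linarith) (by linarith) (by linarith) (by linarith)
      exact mul_le_mul h1 (by linarith) h0 (mul_nonneg (by linarith) (by linarith))
    have h2 : (1 - 1 / 10 ^ 10) * n ≤ n - t := by linarith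
    have h3 : ((1 - 1 / 10 ^ 10) * n) ^ 3 ≤ (n - t) ^ 3 := by
      have : 0 ≤ (1 - 1 / 10 ^ 10) * n := by nlinarith
      gcongr
    rw [mul_pow] at h3
    have h4 : 10 ^ 11 * 10 ^ 11 * n ≤ n ^ 3 := by
      have : 10 ^ 11 * 10 ^ 11 ≤ n * n := mul_le_mul hn11 hn11 (by positivity) (by linarith)
      nlinarith
    norm_num at h3 h4 ⊢
    linarith
  have step : ∀ Y ⊆ V, Y.card ≤ 5 * (t + 1) → ∀ b ∈ V, b ∉ Y → 0.36 * n ^ 2 ≤ G.dg V b → ¬ G.Free (V \ Y) := by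
    intro Y hY hYc b hb hbY hd
    have hYc' : (Y.card : ℝ) ≤ 5 * (t + 1) := by exact_mod_cast hYc
    refine hN2 G V (by omega) (by rw [← hn]; exact hdense) Y hY (by rw [← hn]; linarith) b hb hbY
      (by rw [← hn]; exact hd)
  set A := V.filter (fun v => 0.36 * n ^ 2 ≤ (G.dg V v : ℝ)) with hA
  have hAV : A ⊆ V := filter_subset _ _
  have hAd : ∀ d ∈ A, 0.36 * n ^ 2 ≤ (G.dg V d : ℝ) := fun d hd => (mem_filter.1 hd).2
  have hst : A.card ≤ t := by
    by_contra hlt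
    push Not at hlt
    obtain ⟨D, hDA, hDc⟩ := exists_subset_card_eq (show t + 1 ≤ A.card by omega)
    obtain ⟨X, h1, h2⟩ := greedy (P := fun b => 0.36 * n ^ 2 ≤ (G.dg V b : ℝ)) step D (hDA.trans hAV)
      (fun d hd => hAd d (hDA hd)) 0 ∅ (empty_subset _) PK.nil (disjoint_empty_left _) (by omega)
    rw [hDc, zero_add] at h2
    exact hno ⟨X, h1, h2⟩
  set k := Nat.findGreatest (fun k => ∃ X ⊆ V \ A, G.PK k X) (t + 1 - A.card) with hk
  have hkP : ∃ X ⊆ V \ A, G.PK k X :=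
    Nat.findGreatest_spec (P := fun k => ∃ X ⊆ V \ A, G.PK k X) (Nat.zero_le _) ⟨∅, empty_subset _, PK.nil⟩
  have hkle : k ≤ t + 1 - A.card := Nat.findGreatest_le _
  obtain ⟨X, hX, hPK⟩ := hkP
  have hdisXA : Disjoint X A := disjoint_of_subset_left hX sdiff_disjoint
  have hXV : X ⊆ V := hX.trans sdiff_subset
  have hklt : k < t + 1 - A.card := by
    refine lt_of_le_of_ne hkle fun he => ?_
    obtain ⟨X', h1, h2⟩ := greedy (P := fun b => 0.36 * n ^ 2 ≤ (G.dg V b : ℝ)) step A hAV hAd k X hXV hPK hdisXA (by omega)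
    rw [show k + A.card = t + 1 by omega] at h2
    exact hno ⟨X', h1, h2⟩
  have hWF : G.Free ((V \ A) \ X) := by
    by_contra hcon
    obtain ⟨S, hS, hcop⟩ := exists_cop hcon
    have := Nat.le_findGreatest (P := fun k => ∃ X ⊆ V \ A, G.PK k X) (m := k + 1) hklt
      ⟨S ∪ X, union_subset (hS.trans sdiff_subset) hX, PK.cons hcop hPK (disjoint_of_subset_left hS sdiff_disjoint)⟩
    omega
  have hcA : (V \ A).card + A.card = V.card := card_sdiff_add_card_eq_card hAV
  have hcX : ((V \ A) \ X).card + X.card = (V \ A).card := card_sdiff_add_card_eq_card hX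
  have hXc := hPK.card
  have ht10 : 10 * t ≤ V.card := by
    have : (10 * t : ℝ) ≤ V.card := by rw [← hn]; linarith
    exact_mod_cast this
  have hkA : k + A.card ≤ t := by omega
  have hWc : N1 ≤ ((V \ A) \ X).card := by omega
  obtain ⟨e1, e1'⟩ := hN1 G _ hWc hWF
  obtain ⟨e2, e2'⟩ := cocount (G := G) hAV
  by_cases hDt : A.card = t
  · have hX0 : X = ∅ := by
      rw [← card_eq_zero]; clear e1' e2'; omega
    subst hX0
    have hc2 : (V \ A).card = V.card - t := by clear e1' e2'; omega
    rw [sdiff_empty, hc2] at e1 e1'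
    rw [hc2] at e2 e2'
    have g1 : G.tot (V \ A) = 6 * TN (V.card - t) := by clear e1' e2'; omega
    have g2 : G.tot V + d3 (V.card - t) = d3 V.card + G.tot (V \ A) := by clear e1' e2'; omega
    exact ⟨by rw [g2, g1], A, hAV, hDt, e2' g2, e1' g1⟩
  · exfalso
    obtain ⟨w, hw⟩ : ∃ w : ℝ, w = ((V \ A) \ X).card := ⟨_, rfl⟩
    obtain ⟨a, ha⟩ : ∃ a : ℝ, a = (V \ A).card := ⟨_, rfl⟩
    have h1 : (G.tot V : ℝ) + a * (a - 1) * (a - 2) ≤ n * (n - 1) * (n - 2) + G.tot (V \ A) := by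
      rw [ha, hn, ← d3_cast, ← d3_cast]; exact_mod_cast e2
    have h2 := tot_sdiff (G := G) (U := V \ A) (d := 0.36 * n ^ 2) X hX fun x hx => by
      have h3 : (G.dg (V \ A) x : ℝ) ≤ G.dg V x := by exact_mod_cast dg_mono sdiff_subset x
      refine h3.trans ?_
      by_contra hcon
      push Not at hcon
      exact (Finset.mem_sdiff.1 (hX hx)).2 (mem_filter.2 ⟨hXV hx, hcon.le⟩)
    have h3 : (X.card : ℝ) = 5 * k := by exact_mod_cast hXc
    have h4 : (G.tot ((V \ A) \ X) : ℝ) ≤ 2 / 9 * w ^ 3 := by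
      have h5 : (G.tot ((V \ A) \ X) : ℝ) ≤ 6 * TN ((V \ A) \ X).card := by exact_mod_cast e1
      have h6 := TN_le ((V \ A) \ X).card
      rw [← hw] at h6
      linarith
    have ea : a = n - A.card := by
      rw [ha, hn, ← hcA]; push_cast; ring
    have ew : w = a - 5 * k := by
      rw [hw, ha, ← hcX, ← h3]; push_cast; ring
    have hks : (k : ℝ) + A.card ≤ t := by exact_mod_cast hkA
    have hs1 : (A.card : ℝ) + 1 ≤ t := by exact_mod_cast (lt_of_le_of_ne hst hDt : A.card + 1 ≤ t)
    have hA0 : (0 : ℝ) ≤ A.card := Nat.cast_nonneg _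
    have hk0 : (0 : ℝ) ≤ k := Nat.cast_nonneg _
    have := num n a (n - t) w (t - A.card) k (by rw [ea]; ring) ew (by linarith) hk0 (by linarith)
      (by linarith) (by linarith) (by linarith) (by linarith)
    rw [h3] at h2
    nlinarith
end TG


def ofH (H : HGraph 3) : TG where
  R x y z := x ≠ y ∧ x ≠ z ∧ y ≠ z ∧ ({x, y, z} : Finset ℕ) ∈ H.edges
  s12 x y z h := ⟨h.1.symm, h.2.2.1, h.2.1, by rw [insert_comm]; exact h.2.2.2⟩
  s23 x y z h := ⟨h.2.1, h.1, h.2.2.1.symm, by rw [pair_comm]; exact h.2.2.2⟩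
  ne x y z h := h.1

lemma ofH_R {H : HGraph 3} {x y z : ℕ} :
    (ofH H).R x y z ↔ x ≠ y ∧ x ≠ z ∧ y ≠ z ∧ ({x, y, z} : Finset ℕ) ∈ H.edges := Iff.rfl

lemma ofH_mem {H : HGraph 3} {x y z : ℕ} (h : (ofH H).R x y z) : x ∈ H.verts ∧ y ∈ H.verts ∧ z ∈ H.verts := by
  have := H.edges_sub _ h.2.2.2
  exact ⟨this (by simp), this (by simp), this (by simp)⟩

lemma ofH_tot (H : HGraph 3) : (ofH H).tot H.verts = 6 * H.edges.card := by
  classical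
  unfold TG.tot
  rw [card_eq_sum_card_fiberwise (t := H.edges) (f := fun p => ({p.1, p.2.1, p.2.2} : Finset ℕ))
    (fun p hp => (mem_filter.1 hp).2.2.2.2)]
  rw [mul_comm, ← smul_eq_mul]
  refine sum_const_nat fun e he => ?_
  obtain ⟨a, b, c, hab, hac, hbc, rfl⟩ := card_eq_three.1 (H.edges_card e he)
  have hs := H.edges_sub _ he
  have ha : a ∈ H.verts := hs (by simp)
  have hb : b ∈ H.verts := hs (by simp)
  have hc : c ∈ H.verts := hs (by simp)
  have : {p ∈ {p ∈ H.verts ×ˢ H.verts ×ˢ H.verts | (ofH H).R p.1 p.2.1 p.2.2} |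
      ({p.1, p.2.1, p.2.2} : Finset ℕ) = {a, b, c}} =
      {(a, b, c), (a, c, b), (b, a, c), (b, c, a), (c, a, b), (c, b, a)} := by
    ext ⟨x, y, z⟩
    simp only [mem_filter, mem_product, ofH_R, mem_insert, mem_singleton, Prod.mk.injEq]
    constructor
    · rintro ⟨⟨_, n1, n2, n3, _⟩, h⟩
      have hx : x ∈ ({a, b, c} : Finset ℕ) := by rw [← h]; simp
      have hy : y ∈ ({a, b, c} : Finset ℕ) := by rw [← h]; simp
      have hz : z ∈ ({a, b, c} : Finset ℕ) := by rw [← h]; simp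
      simp only [mem_insert, mem_singleton] at hx hy hz
      clear h
      rcases hx with rfl | rfl | rfl <;> rcases hy with rfl | rfl | rfl <;> rcases hz with rfl | rfl | rfl <;> simp_all
    · intro h
      have key : ({x, y, z} : Finset ℕ) = {a, b, c} := by
        rcases h with ⟨rfl, rfl, rfl⟩ | ⟨rfl, rfl, rfl⟩ | ⟨rfl, rfl, rfl⟩ | ⟨rfl, rfl, rfl⟩ | ⟨rfl, rfl, rfl⟩ | ⟨rfl, rfl, rfl⟩ <;>
          ext <;> simp only [mem_insert, mem_singleton] <;> tauto
      rw [key]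
      refine ⟨?_, rfl⟩
      rcases h with ⟨rfl, rfl, rfl⟩ | ⟨rfl, rfl, rfl⟩ | ⟨rfl, rfl, rfl⟩ | ⟨rfl, rfl, rfl⟩ | ⟨rfl, rfl, rfl⟩ | ⟨rfl, rfl, rfl⟩ <;>
        tauto
  rw [this]
  rw [card_insert_of_notMem, card_insert_of_notMem, card_insert_of_notMem, card_insert_of_notMem,
      card_insert_of_notMem, card_singleton] <;> simp only [mem_insert, mem_singleton, Prod.mk.injEq] <;> tauto

lemma mem_induce {H : HGraph 3} {S e : Finset ℕ} : e ∈ (H.induce S).edges ↔ e ∈ H.edges ∧ e ⊆ S := by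
  simp only [HGraph.induce, HGraph.ofEdges, mem_filter]
  exact ⟨fun h => h.1, fun h => ⟨h, subset_inter (H.edges_sub _ h.1) h.2, H.edges_card _ h.1⟩⟩

lemma genTri_verts : (genTri 3).verts = {1, 2, 3, 4, 5} := by decide
lemma genTri_edges : (genTri 3).edges = {{1, 2, 3}, {1, 2, 4}, {3, 4, 5}} := by decide

lemma copy_iff {H : HGraph 3} {S : Finset ℕ} (hS : S ⊆ H.verts) :
    (genTri 3).IsCopyIn (H.induce S) ↔ ¬ (ofH H).Free S := by
  have hv : (H.induce S).verts = S := by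
    simp only [HGraph.induce, HGraph.ofEdges]; exact inter_eq_right.2 hS
  unfold HGraph.IsCopyIn
  rw [genTri_verts, genTri_edges, hv]
  simp only [mem_insert, mem_singleton, forall_eq_or_imp, forall_eq, mem_induce, image_insert, image_singleton]
  constructor
  · rintro ⟨f, hinj, ⟨m1, m2, m3, m4, m5⟩, e1, e2, e3⟩ hF
    have hne : ∀ i ∈ ({1, 2, 3, 4, 5} : Finset ℕ), ∀ j ∈ ({1, 2, 3, 4, 5} : Finset ℕ), i ≠ j → f i ≠ f j :=
      fun i hi j hj hij h => hij (hinj hi hj h)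
    rcases hF (f 1) m1 (f 2) m2 (f 3) m3 (f 4) m4 (f 5) m5
      ⟨hne 1 (by decide) 2 (by decide) (by decide), hne 1 (by decide) 3 (by decide) (by decide),
        hne 2 (by decide) 3 (by decide) (by decide), e1.1⟩
      ⟨hne 1 (by decide) 2 (by decide) (by decide), hne 1 (by decide) 4 (by decide) (by decide),
        hne 2 (by decide) 4 (by decide) (by decide), e2.1⟩
      (hne 3 (by decide) 4 (by decide) (by decide))
      ⟨hne 3 (by decide) 4 (by decide) (by decide), hne 3 (by decide) 5 (by decide) (by decide),
        hne 4 (by decide) 5 (by decide) (by decide), e3.1⟩ with h | h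
    · exact hne 5 (by decide) 1 (by decide) (by decide) h
    · exact hne 5 (by decide) 2 (by decide) (by decide) h
  · intro h
    unfold TG.Free at h
    push Not at h
    obtain ⟨p, hp, q, hq, r, hr, s, hs, w, hw, h1, h2, h3, h4, h5, h6⟩ := h
    have := h1.1
    have := h1.2.1
    have := h1.2.2.1
    have := h2.2.1
    have := h2.2.2.1
    have := h4.2.1
    have := h4.2.2.1
    refine ⟨fun x => if x = 1 then p else if x = 2 then q else if x = 3 then r else if x = 4 then s else w, ?_, ?_⟩
    · intro i hi j hj hij
      simp only [coe_insert, coe_singleton, Set.mem_insert_iff, Set.mem_singleton_iff] at hi hj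
      rcases hi with rfl | rfl | rfl | rfl | rfl <;> rcases hj with rfl | rfl | rfl | rfl | rfl <;>
        first
          | rfl
          | (exfalso; revert hij; norm_num; tauto)
    · norm_num
      refine ⟨⟨hp, hq, hr, hs, hw⟩, ⟨h1.2.2.2, ?_⟩, ⟨h2.2.2.2, ?_⟩, ⟨h4.2.2.2, ?_⟩⟩ <;>
      · intro x hx
        simp only [mem_insert, mem_singleton] at hx
        rcases hx with rfl | rfl | rfl <;> assumption

lemma PK_fun {G : TG} {k : ℕ} {X : Finset ℕ} (h : G.PK k X) :
    ∃ S : Fin k → Finset ℕ, (∀ i, S i ⊆ X ∧ G.Cop (S i)) ∧ ∀ i j, i ≠ j → Disjoint (S i) (S j) := by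
  induction h with
  | nil => exact ⟨fun _ => ∅, fun i => i.elim0, fun i => i.elim0⟩
  | @cons k S Y hS _ hd ih =>
    obtain ⟨T, h1, h2⟩ := ih
    refine ⟨Fin.cons S T, ?_, ?_⟩
    · intro i
      refine Fin.cases ?_ ?_ i
      · exact ⟨subset_union_left, hS⟩
      · intro i; exact ⟨(h1 i).1.trans subset_union_right, (h1 i).2⟩
    · intro i j
      refine Fin.cases ?_ ?_ i
      · refine Fin.cases ?_ ?_ j
        · intro h; exact absurd rfl h
        · intro j _; exact disjoint_of_subset_right (h1 j).1 hd
      · intro i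
        refine Fin.cases ?_ ?_ j
        · intro _; exact (disjoint_of_subset_right (h1 i).1 hd).symm
        · intro j hij; exact h2 i j fun h => hij (by rw [h])

lemma hasMatching_of_PK {H : HGraph 3} {k : ℕ} {X : Finset ℕ} (hX : X ⊆ H.verts) (h : (ofH H).PK k X) :
    (genTri 3).HasMatching H k := by
  obtain ⟨S, h1, h2⟩ := PK_fun h
  refine ⟨S, fun i => ⟨(h1 i).1.trans hX, ?_⟩, h2, fun i => (copy_iff ((h1 i).1.trans hX)).2 (h1 i).2.2⟩
  rw [(h1 i).2.1, genTri_verts]; rfl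

lemma iso_edges {G H : HGraph 3} (h : G.Iso H) : G.edges.card = H.edges.card := by
  obtain ⟨f, hf, he⟩ := h
  refine card_bij (fun e _ => e.image f) ?_ ?_ ?_
  · intro e h
    exact (he e (mem_powersetCard.2 ⟨G.edges_sub _ h, G.edges_card _ h⟩)).1 h
  · intro e h e' h' heq
    have heq' : f '' (e : Set ℕ) = f '' (e' : Set ℕ) := by
      rw [← coe_image, ← coe_image]; exact_mod_cast heq
    have := (hf.injOn.image_eq_image_iff (by exact_mod_cast G.edges_sub _ h) (by exact_mod_cast G.edges_sub _ h')).1 heq'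
    exact_mod_cast this
  · intro e' h'
    have hsub := H.edges_sub _ h'
    have himg : (G.verts.filter (fun x => f x ∈ e')).image f = e' := by
      ext y
      simp only [mem_image, mem_filter]
      constructor
      · rintro ⟨x, ⟨_, hx⟩, rfl⟩; exact hx
      · intro hy
        obtain ⟨x, hx, rfl⟩ := hf.surjOn (hsub hy)
        exact ⟨x, ⟨hx, hy⟩, rfl⟩
    refine ⟨G.verts.filter (fun x => f x ∈ e'), ?_, himg⟩
    refine (he _ (mem_powersetCard.2 ⟨filter_subset _ _, ?_⟩)).2 (by rw [himg]; exact h')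
    have hc : ((G.verts.filter (fun x => f x ∈ e')).image f).card = (G.verts.filter (fun x => f x ∈ e')).card := by
      refine card_image_of_injOn ?_
      intro a ha b hb hab
      exact hf.injOn (mem_filter.1 ha).1 (mem_filter.1 hb).1 hab
    rw [← hc, himg]; exact H.edges_card _ h'

lemma iso_matching {F G H : HGraph 3} (h : G.Iso H) {k : ℕ} (hM : F.HasMatching G k) : F.HasMatching H k := by
  obtain ⟨f, hf, he⟩ := h
  obtain ⟨S, h1, h2, h3⟩ := hM
  have hinj : ∀ i, Set.InjOn f (S i) := fun i => hf.injOn.mono (by exact_mod_cast (h1 i).1)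
  have hsub : ∀ i, (S i).image f ⊆ H.verts := by
    intro i y hy
    obtain ⟨x, hx, rfl⟩ := mem_image.1 hy
    exact hf.mapsTo ((h1 i).1 hx)
  refine ⟨fun i => (S i).image f, fun i => ⟨hsub i, ?_⟩, ?_, ?_⟩
  · rw [card_image_of_injOn (hinj i), (h1 i).2]
  · intro i j hij
    rw [disjoint_left]
    intro y hy hy'
    obtain ⟨x, hx, rfl⟩ := mem_image.1 hy
    obtain ⟨x', hx', hxx⟩ := mem_image.1 hy'
    have := hf.injOn ((h1 j).1 hx') ((h1 i).1 hx) hxx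
    subst this
    exact disjoint_left.1 (h2 i j hij) hx hx'
  · intro i
    obtain ⟨g, g1, g2, g3⟩ := h3 i
    have hiv : (G.induce (S i)).verts = S i := by
      simp only [HGraph.induce, HGraph.ofEdges]; exact inter_eq_right.2 (h1 i).1
    have hiv' : (H.induce ((S i).image f)).verts = (S i).image f := by
      simp only [HGraph.induce, HGraph.ofEdges]; exact inter_eq_right.2 (hsub i)
    rw [hiv] at g2
    refine ⟨f ∘ g, ?_, ?_, ?_⟩
    · exact (hinj i).comp g1 (fun x hx => g2 x hx)
    · intro v hv
      rw [hiv']; exact mem_image_of_mem f (g2 v hv)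
    · intro e hee
      have := g3 e hee
      rw [mem_induce] at this ⊢
      rw [← image_image]
      exact ⟨(he _ (mem_powersetCard.2 ⟨G.edges_sub _ this.1, G.edges_card _ this.1⟩)).1 this.1,
        image_subset_image this.2⟩


def Phi (a b c : Option (Fin 3)) : Prop := a = none ∨ b = none ∨ c = none ∨ (a ≠ b ∧ a ≠ c ∧ b ≠ c)

lemma sorted_perm (p : Fin 3 → ℕ) (m : ℕ) (hm : 3 ≤ m) (hs : p 0 + p 1 + p 2 = m) (hp : p 0 * p 1 * p 2 = TN m) :
    ∃ σ : Equiv.Perm (Fin 3), p (σ 0) = m / 3 ∧ p (σ 1) = (m + 1) / 3 ∧ p (σ 2) = (m + 2) / 3 := by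
  refine ⟨Tuple.sort p, ?_⟩
  have hmono := Tuple.monotone_sort p
  have h1 : p (Tuple.sort p 0) ≤ p (Tuple.sort p 1) := hmono (by decide)
  have h2 : p (Tuple.sort p 1) ≤ p (Tuple.sort p 2) := hmono (by decide)
  have h3 : ∑ i, p (Tuple.sort p i) = ∑ i, p i := Equiv.sum_comp _ _
  have h4 : ∏ i, p (Tuple.sort p i) = ∏ i, p i := Equiv.prod_comp _ _
  rw [Fin.sum_univ_three, Fin.sum_univ_three, hs] at h3
  rw [Fin.prod_univ_three, Fin.prod_univ_three, hp] at h4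
  exact (TN_bound_sorted m _ _ _ h1 h2 h3).2 h4 hm

lemma color_of {G : TG} {V A : Finset ℕ} {t m : ℕ} {f : ℕ → Fin 3} (hAV : A ⊆ V) (hA : A.card = t) (hm : 3 ≤ m)
    (hV : V.card = t + m)
    (h1 : ∀ x ∈ V, ∀ y ∈ V, ∀ z ∈ V, x ≠ y → x ≠ z → y ≠ z → (x ∈ A ∨ y ∈ A ∨ z ∈ A) → G.R x y z)
    (h2 : (TG.part f (V \ A) 0).card * (TG.part f (V \ A) 1).card * (TG.part f (V \ A) 2).card = TN m)
    (h3 : ∀ x ∈ V \ A, ∀ y ∈ V \ A, ∀ z ∈ V \ A, G.R x y z ↔ (f x ≠ f y ∧ f x ≠ f z ∧ f y ≠ f z)) :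
    ∃ c : ℕ → Option (Fin 3), (∀ o, (V.filter (fun x => c x = o)).card =
        o.elim t ![m / 3, (m + 1) / 3, (m + 2) / 3]) ∧
      ∀ x ∈ V, ∀ y ∈ V, ∀ z ∈ V, x ≠ y → x ≠ z → y ≠ z → (G.R x y z ↔ Phi (c x) (c y) (c z)) := by
  classical
  have hc := card_sdiff_add_card_eq_card hAV
  obtain ⟨σ, s0, s1, s2⟩ := sorted_perm (fun i => (TG.part f (V \ A) i).card) m hm
    (by rw [TG.part_card]; omega) h2
  refine ⟨fun x => if x ∈ A then none else some (σ.symm (f x)), ?_, ?_⟩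
  · intro o
    have key : ∀ i : Fin 3, V.filter (fun x => (if x ∈ A then none else some (σ.symm (f x))) = some i) =
        TG.part f (V \ A) (σ i) := by
      intro i
      ext x
      simp only [mem_filter, TG.part, Finset.mem_sdiff]
      by_cases hx : x ∈ A
      · simp [hx]
      · simp [hx, Equiv.symm_apply_eq]
    rcases o with _ | i
    · have : V.filter (fun x => (if x ∈ A then none else some (σ.symm (f x))) = none) = A := by
        ext x
        simp only [mem_filter]
        by_cases hx : x ∈ A
        · simp [hx, hAV hx]
        · simp [hx]
      rw [this, hA]; rfl
    · rw [key]
      fin_cases i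
      · exact s0
      · exact s1
      · exact s2
  · intro x hx y hy z hz n1 n2 n3
    by_cases ax : x ∈ A
    · simp only [ax, if_true, Phi, true_or, iff_true]; exact h1 x hx y hy z hz n1 n2 n3 (Or.inl ax)
    by_cases ay : y ∈ A
    · simp only [ay, if_true, Phi, true_or, or_true, iff_true]; exact h1 x hx y hy z hz n1 n2 n3 (Or.inr (Or.inl ay))
    by_cases az : z ∈ A
    · simp only [az, if_true, Phi, true_or, or_true, iff_true]; exact h1 x hx y hy z hz n1 n2 n3 (Or.inr (Or.inr az))
    rw [h3 x (Finset.mem_sdiff.2 ⟨hx, ax⟩) y (Finset.mem_sdiff.2 ⟨hy, ay⟩) z (Finset.mem_sdiff.2 ⟨hz, az⟩)]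
    simp [ax, ay, az, Phi]

lemma glue {ι : Type*} {V V' : Finset ℕ} {c c' : ℕ → ι} [DecidableEq ι]
    (h : ∀ o, (V.filter (fun x => c x = o)).card = (V'.filter (fun x => c' x = o)).card) :
    ∃ g : ℕ → ℕ, Set.BijOn g V V' ∧ ∀ x ∈ V, c' (g x) = c x := by
  classical
  have : ∀ o, ∃ g : ℕ → ℕ, Set.BijOn g (V.filter (fun x => c x = o)) (V'.filter (fun x => c' x = o)) := by
    intro o
    refine Set.Finite.exists_bijOn_of_encard_eq (finite_toSet _) ?_
    rw [Set.encard_coe_eq_coe_finsetCard, Set.encard_coe_eq_coe_finsetCard, h o]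
  choose g hg using this
  have hmem : ∀ x ∈ V, g (c x) x ∈ V' ∧ c' (g (c x) x) = c x := by
    intro x hx
    have := (hg (c x)).mapsTo (show x ∈ (↑(V.filter (fun y => c y = c x)) : Set ℕ) by simpa using hx)
    simpa using this
  refine ⟨fun x => g (c x) x, ⟨fun x hx => (hmem x hx).1, ?_, ?_⟩, fun x hx => (hmem x hx).2⟩
  · intro x hx y hy hxy
    have hxy' : g (c x) x = g (c y) y := hxy
    have hcc : c x = c y := by rw [← (hmem x hx).2, ← (hmem y hy).2, hxy']
    rw [hcc] at hxy'
    refine (hg (c y)).injOn ?_ ?_ hxy'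
    · simpa [hcc] using hx
    · simpa using hy
  · intro y hy
    obtain ⟨x, hx, hxy⟩ := (hg (c' y)).surjOn (show y ∈ (↑(V'.filter (fun z => c' z = c' y)) : Set ℕ) by simpa using hy)
    simp only [coe_filter, Set.mem_ofPred_eq] at hx
    exact ⟨x, hx.1, by simp only [hx.2]; exact hxy⟩

lemma iso_of_color {G H : HGraph 3} {c c' : ℕ → Option (Fin 3)}
    (h : ∀ o, (G.verts.filter (fun x => c x = o)).card = (H.verts.filter (fun x => c' x = o)).card)
    (h1 : ∀ x ∈ G.verts, ∀ y ∈ G.verts, ∀ z ∈ G.verts, x ≠ y → x ≠ z → y ≠ z →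
      ((ofH G).R x y z ↔ Phi (c x) (c y) (c z)))
    (h2 : ∀ x ∈ H.verts, ∀ y ∈ H.verts, ∀ z ∈ H.verts, x ≠ y → x ≠ z → y ≠ z →
      ((ofH H).R x y z ↔ Phi (c' x) (c' y) (c' z))) : G.Iso H := by
  obtain ⟨g, hg, hgc⟩ := glue h
  refine ⟨g, hg, fun e he => ?_⟩
  obtain ⟨hsub, hcard⟩ := mem_powersetCard.1 he
  obtain ⟨x, y, z, n1, n2, n3, rfl⟩ := card_eq_three.1 hcard
  have hx : x ∈ G.verts := hsub (by simp)
  have hy : y ∈ G.verts := hsub (by simp)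
  have hz : z ∈ G.verts := hsub (by simp)
  have m1 : g x ≠ g y := fun h => n1 (hg.injOn hx hy h)
  have m2 : g x ≠ g z := fun h => n2 (hg.injOn hx hz h)
  have m3 : g y ≠ g z := fun h => n3 (hg.injOn hy hz h)
  have a := h1 x hx y hy z hz n1 n2 n3
  have b := h2 (g x) (hg.mapsTo hx) (g y) (hg.mapsTo hy) (g z) (hg.mapsTo hz) m1 m2 m3
  rw [hgc x hx, hgc y hy, hgc z hz] at b
  rw [image_insert, image_insert, image_singleton]
  have c1 := a.trans b.symm
  rw [ofH_R, ofH_R] at c1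
  tauto

/-- the extremal graph -/
def TT (t n : ℕ) : HGraph 3 := (completeOn 3 (Finset.range t)).join (turanOn 3 3 (Finset.Ico t n))

lemma TT_verts {t n : ℕ} (h : t ≤ n) : (TT t n).verts = range n := by
  simp only [TT, HGraph.join, completeOn, turanOn, HGraph.ofEdges]
  ext x; simp only [mem_union, mem_range, mem_Ico]; omega

lemma TT_edges {t n : ℕ} (h : t ≤ n) (e : Finset ℕ) : e ∈ (TT t n).edges ↔ e ⊆ range n ∧ e.card = 3 ∧
    ((∃ x ∈ e, x < t) ∨ ∀ u ∈ e, ∀ v ∈ e, u % 3 = v % 3 → u = v) := by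
  have hv : range t ∪ Ico t n = range n := by
    ext x; simp only [mem_union, mem_range, mem_Ico]; omega
  simp only [TT, HGraph.join, completeOn, turanOn, HGraph.ofEdges, mem_filter, mem_union, mem_powersetCard, hv]
  constructor
  · rintro ⟨h1, h2, h3⟩
    refine ⟨h2, h3, ?_⟩
    rcases h1 with (h1 | h1) | h1
    · obtain ⟨x, hx⟩ : e.Nonempty := card_pos.1 (by omega)
      exact Or.inl ⟨x, hx, mem_range.1 (h1.1.1 hx)⟩
    · exact Or.inr h1.1.2
    · obtain ⟨x, hx⟩ := h1.2.1
      rw [mem_inter, mem_range] at hx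
      exact Or.inl ⟨x, hx⟩
  · rintro ⟨h2, h3, h4⟩
    refine ⟨?_, h2, h3⟩
    by_cases hex : ∃ x ∈ e, x < t
    · obtain ⟨x, hx, hxt⟩ := hex
      by_cases hall : e ⊆ range t
      · exact Or.inl (Or.inl ⟨⟨hall, h3⟩, hall, h3⟩)
      · right
        obtain ⟨y, hy, hyt⟩ := not_subset.1 hall
        refine ⟨⟨h2, h3⟩, ⟨x, by simp [hx, hxt]⟩, ⟨y, ?_⟩⟩
        have := mem_range.1 (h2 hy)
        simp only [mem_range] at hyt
        simp only [mem_inter, mem_Ico]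
        exact ⟨hy, by omega, this⟩
    · have hI : e ⊆ Ico t n := by
        intro y hy
        have := mem_range.1 (h2 hy)
        rw [mem_Ico]
        refine ⟨?_, this⟩
        by_contra hlt
        exact hex ⟨y, hy, by omega⟩
      have h5 := h4.resolve_left hex
      exact Or.inl (Or.inr ⟨⟨⟨hI, h3⟩, h5⟩, hI, h3⟩)

lemma TT_R {t n : ℕ} (h : t ≤ n) {x y z : ℕ} (hx : x < n) (hy : y < n) (hz : z < n) (n1 : x ≠ y) (n2 : x ≠ z)
    (n3 : y ≠ z) : (ofH (TT t n)).R x y z ↔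
      (x < t ∨ y < t ∨ z < t ∨ (x % 3 ≠ y % 3 ∧ x % 3 ≠ z % 3 ∧ y % 3 ≠ z % 3)) := by
  rw [ofH_R, TT_edges h]
  have hs : ({x, y, z} : Finset ℕ) ⊆ range n := by
    intro w hw
    simp only [mem_insert, mem_singleton] at hw
    rw [mem_range]; rcases hw with rfl | rfl | rfl <;> assumption
  have hc : ({x, y, z} : Finset ℕ).card = 3 := card_eq_three.2 ⟨x, y, z, n1, n2, n3, rfl⟩
  simp only [hs, hc, true_and, mem_insert, mem_singleton, forall_eq_or_imp, forall_eq, exists_eq_or_imp, exists_eq_left]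
  constructor
  · rintro ⟨_, _, _, (h | h | h) | ⟨⟨_, h1, h2⟩, ⟨_, _, h3⟩, _⟩⟩
    · exact Or.inl h
    · exact Or.inr (Or.inl h)
    · exact Or.inr (Or.inr (Or.inl h))
    · exact Or.inr (Or.inr (Or.inr ⟨fun h => n1 (h1 h), fun h => n2 (h2 h), fun h => n3 (h3 h)⟩))
  · intro h
    refine ⟨n1, n2, n3, ?_⟩
    rcases h with h | h | h | h'
    · exact Or.inl (Or.inl h)
    · exact Or.inl (Or.inr (Or.inl h))
    · exact Or.inl (Or.inr (Or.inr h))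
    right
    obtain ⟨a, b, c⟩ := h'
    refine ⟨⟨fun _ => trivial, fun h => absurd h a, fun h => absurd h b⟩,
      ⟨fun h => absurd h.symm a, fun _ => trivial, fun h => absurd h c⟩,
      ⟨fun h => absurd h.symm b, fun h => absurd h.symm c, fun _ => trivial⟩⟩

def f3 (x : ℕ) : Fin 3 := ⟨x % 3, Nat.mod_lt _ (by norm_num)⟩

lemma f3_ne {x y : ℕ} : f3 x ≠ f3 y ↔ x % 3 ≠ y % 3 := by simp [f3, Fin.ext_iff]

lemma class_card (t j : ℕ) (hj : j < 3) (m : ℕ) :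
    ((Ico t (t + m)).filter (fun x => x % 3 = (t + j) % 3)).card = (m + 2 - j) / 3 := by
  induction m with
  | zero => simp; omega
  | succ m ih =>
    have hI : Ico t (t + (m + 1)) = insert (t + m) (Ico t (t + m)) := by
      ext x; simp only [mem_insert, mem_Ico]; omega
    rw [hI, filter_insert]
    split_ifs with h
    · rw [card_insert_of_notMem (by simp), ih]; omega
    · rw [ih]; omega

lemma part_f3 (V : Finset ℕ) (i : Fin 3) : TG.part f3 V i = V.filter (fun x => x % 3 = i.val) := by
  ext x; simp [TG.part, f3, Fin.ext_iff]

lemma class_prod (t m : ℕ) : (TG.part f3 (Ico t (t + m)) 0).card * (TG.part f3 (Ico t (t + m)) 1).card *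
    (TG.part f3 (Ico t (t + m)) 2).card = TN m := by
  rw [part_f3, part_f3, part_f3]
  have h0 := class_card t 0 (by omega) m
  have h1 := class_card t 1 (by omega) m
  have h2 := class_card t 2 (by omega) m
  have e0 : m + 2 - 1 = m + 1 := by omega
  rw [e0] at h1
  simp only [Nat.sub_zero, Nat.add_sub_cancel] at h0 h2
  unfold TN
  have : t % 3 = 0 ∨ t % 3 = 1 ∨ t % 3 = 2 := by omega
  rcases this with h | h | h
  · rw [show (t + 0) % 3 = 0 by omega] at h0
    rw [show (t + 1) % 3 = 1 by omega] at h1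
    rw [show (t + 2) % 3 = 2 by omega] at h2
    simp only [Fin.val_zero, Fin.val_one, Fin.val_two, h0, h1, h2]; ring
  · rw [show (t + 0) % 3 = 1 by omega] at h0
    rw [show (t + 1) % 3 = 2 by omega] at h1
    rw [show (t + 2) % 3 = 0 by omega] at h2
    simp only [Fin.val_zero, Fin.val_one, Fin.val_two, h0, h1, h2]; ring
  · rw [show (t + 0) % 3 = 2 by omega] at h0
    rw [show (t + 1) % 3 = 0 by omega] at h1
    rw [show (t + 2) % 3 = 1 by omega] at h2
    simp only [Fin.val_zero, Fin.val_one, Fin.val_two, h0, h1, h2]; ring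


lemma cocount_ge {G : TG} {V A : Finset ℕ}
    (h : ∀ x ∈ V, ∀ y ∈ V, ∀ z ∈ V, x ≠ y → x ≠ z → y ≠ z → (x ∈ A ∨ y ∈ A ∨ z ∈ A) → G.R x y z) :
    TG.d3 V.card + G.tot (V \ A) ≤ G.tot V + TG.d3 (V \ A).card := by
  classical
  rw [← TG.KK_tot, ← TG.KK_tot]
  unfold TG.tot
  set a := (V ×ˢ V ×ˢ V).filter (fun p => G.R p.1 p.2.1 p.2.2)
  set b := ((V \ A) ×ˢ (V \ A) ×ˢ (V \ A)).filter (fun p => TG.KK.R p.1 p.2.1 p.2.2)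
  set c := (V ×ˢ V ×ˢ V).filter (fun p => TG.KK.R p.1 p.2.1 p.2.2)
  set d := ((V \ A) ×ˢ (V \ A) ×ˢ (V \ A)).filter (fun p => G.R p.1 p.2.1 p.2.2)
  have h1 : c ⊆ a ∪ b := by
    rintro ⟨x, y, z⟩ hp
    simp only [a, b, c, mem_union, mem_filter, mem_product, Finset.mem_sdiff] at hp ⊢
    obtain ⟨⟨hx, hy, hz⟩, n1, n2, n3⟩ := hp
    by_cases hA : x ∈ A ∨ y ∈ A ∨ z ∈ A
    · exact Or.inl ⟨⟨hx, hy, hz⟩, h x hx y hy z hz n1 n2 n3 hA⟩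
    · push Not at hA
      exact Or.inr ⟨⟨⟨hx, hA.1⟩, ⟨hy, hA.2.1⟩, ⟨hz, hA.2.2⟩⟩, n1, n2, n3⟩
  have h2 : d ⊆ a ∩ b := by
    rintro ⟨x, y, z⟩ hp
    simp only [a, b, d, mem_inter, mem_filter, mem_product, Finset.mem_sdiff] at hp ⊢
    exact ⟨⟨⟨hp.1.1.1, hp.1.2.1.1, hp.1.2.2.1⟩, hp.2⟩, hp.1, G.ne12 hp.2, G.ne13 hp.2, G.ne23 hp.2⟩
  have h3 := card_union_add_card_inter a b
  have h4 := card_le_card h1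
  have h5 := card_le_card h2
  omega

lemma tot_ge {G : TG} {W : Finset ℕ} {f : ℕ → Fin 3}
    (h : ∀ x ∈ W, ∀ y ∈ W, ∀ z ∈ W, (f x ≠ f y ∧ f x ≠ f z ∧ f y ≠ f z) → G.R x y z) :
    6 * ((TG.part f W 0).card * (TG.part f W 1).card * (TG.part f W 2).card) ≤ G.tot W := by
  classical
  have hsub : (({(0,1,2),(0,2,1),(1,0,2),(1,2,0),(2,0,1),(2,1,0)} : Finset (Fin 3 × Fin 3 × Fin 3))).biUnion
      (fun p => TG.part f W p.1 ×ˢ TG.part f W p.2.1 ×ˢ TG.part f W p.2.2) ⊆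
      (W ×ˢ W ×ˢ W).filter (fun p => G.R p.1 p.2.1 p.2.2) := by
    rintro ⟨x, y, z⟩ hp
    rw [mem_biUnion] at hp
    obtain ⟨⟨i, j, k⟩, hi, hp⟩ := hp
    simp only [mem_product, TG.part, mem_filter] at hp ⊢
    obtain ⟨⟨hx, rfl⟩, ⟨hy, rfl⟩, ⟨hz, rfl⟩⟩ := hp
    refine ⟨⟨hx, hy, hz⟩, h x hx y hy z hz ?_⟩
    generalize f x = i at hi
    generalize f y = j at hi
    generalize f z = k at hi
    revert i j k
    decide
  refine le_trans (le_of_eq ?_) (card_le_card hsub)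
  rw [card_biUnion]
  · simp only [card_product]
    rw [sum_insert (by decide), sum_insert (by decide), sum_insert (by decide), sum_insert (by decide),
      sum_insert (by decide), sum_singleton]
    ring
  · rintro ⟨i, j, k⟩ _ ⟨i', j', k'⟩ _ hne
    rw [Function.onFun_apply, disjoint_left]
    rintro ⟨x, y, z⟩ h1 h2
    simp only [mem_product, TG.part, mem_filter] at h1 h2
    apply hne
    rw [← h1.1.2, ← h1.2.1.2, ← h1.2.2.2, ← h2.1.2, ← h2.2.1.2, ← h2.2.2.2]

lemma TT_sdiff {t n : ℕ} : range n \ range t = Ico t n := by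
  ext x; simp only [Finset.mem_sdiff, mem_range, mem_Ico]; omega

lemma TT_all {t n : ℕ} (h : t ≤ n) : ∀ x ∈ range n, ∀ y ∈ range n, ∀ z ∈ range n, x ≠ y → x ≠ z → y ≠ z →
    (x ∈ range t ∨ y ∈ range t ∨ z ∈ range t) → (ofH (TT t n)).R x y z := by
  intro x hx y hy z hz n1 n2 n3 hor
  simp only [mem_range] at hx hy hz hor
  rw [TT_R h hx hy hz n1 n2 n3]
  rcases hor with h | h | h <;> simp [h]

lemma TT_part {t n : ℕ} (h : t ≤ n) : ∀ x ∈ Ico t n, ∀ y ∈ Ico t n, ∀ z ∈ Ico t n,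
    (ofH (TT t n)).R x y z ↔ (f3 x ≠ f3 y ∧ f3 x ≠ f3 z ∧ f3 y ≠ f3 z) := by
  intro x hx y hy z hz
  simp only [mem_Ico] at hx hy hz
  rw [f3_ne, f3_ne, f3_ne]
  constructor
  · intro hR
    have := (TT_R h hx.2 hy.2 hz.2 hR.1 hR.2.1 hR.2.2.1).1 hR
    omega
  · intro hm
    rw [TT_R h hx.2 hy.2 hz.2 (fun h => hm.1 (by rw [h])) (fun h => hm.2.1 (by rw [h])) (fun h => hm.2.2 (by rw [h]))]
    exact Or.inr (Or.inr (Or.inr hm))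

lemma TT_prod {t n : ℕ} (h : t ≤ n) : (TG.part f3 (Ico t n) 0).card * (TG.part f3 (Ico t n) 1).card *
    (TG.part f3 (Ico t n) 2).card = TN (n - t) := by
  have := class_prod t (n - t)
  rwa [show t + (n - t) = n by omega] at this

lemma TT_count {t n : ℕ} (h : t ≤ n) :
    TG.d3 n + 6 * TN (n - t) ≤ (ofH (TT t n)).tot (range n) + TG.d3 (n - t) := by
  have h1 := cocount_ge (TT_all h)
  rw [TT_sdiff, card_range, Nat.card_Ico] at h1
  have h2 := tot_ge (G := ofH (TT t n)) (W := Ico t n) (f := f3) fun x hx y hy z hz => (TT_part h x hx y hy z hz).2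
  rw [TT_prod h] at h2
  omega

lemma TT_free {t n : ℕ} (h : t ≤ n) : (ofH (TT t n)).Free (Ico t n) := by
  intro p hp q hq r hr s hs w hw h1 h2 _ h4
  rw [TT_part h p hp q hq r hr, f3_ne, f3_ne, f3_ne] at h1
  rw [TT_part h p hp q hq s hs, f3_ne, f3_ne, f3_ne] at h2
  rw [TT_part h r hr s hs w hw, f3_ne, f3_ne, f3_ne] at h4
  omega

lemma TT_nomatch {t n : ℕ} (h : t ≤ n) : ¬ (genTri 3).HasMatching (TT t n) (t + 1) := by
  rintro ⟨S, h1, h2, h3⟩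
  have key : ∀ i, ∃ x ∈ S i, x < t := by
    intro i
    by_contra hcon
    push Not at hcon
    refine (copy_iff (h1 i).1).1 (h3 i) ((TT_free h).mono ?_)
    intro x hx
    have := (h1 i).1 hx
    rw [TT_verts h, mem_range] at this
    exact mem_Ico.2 ⟨hcon x hx, this⟩
  choose g hg hgt using key
  have hinj : Function.Injective (fun i => (⟨g i, hgt i⟩ : Fin t)) := by
    intro i j hij
    by_contra hne
    have : g i = g j := by simpa using hij
    exact disjoint_left.1 (h2 i j hne) (hg i) (this ▸ hg j)
  have := Fintype.card_le_of_injective _ hinj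
  simp at this

theorem statement_seven_aux :
    ∃ N₀ : ℕ, ∃ c : ℝ, 0 < c ∧ ∀ n : ℕ, N₀ ≤ n → ∀ t : ℕ, (t : ℝ) ≤ c * n →
      ∀ H : HGraph 3, IsExtremalMatchingFree 3 n t (genTri 3) H ↔
        H.Iso ((completeOn 3 (Finset.range t)).join (turanOn 3 3 (Finset.Ico t n))) := by
  obtain ⟨N, hN⟩ := TG.main
  refine ⟨N + 10, 1 / 10 ^ 10, by norm_num, fun n hn t ht H => ?_⟩
  change IsExtremalMatchingFree 3 n t (genTri 3) H ↔ H.Iso (TT t n)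
  have h10 : 10 * t ≤ n := by
    have h0 : (0 : ℝ) ≤ n := Nat.cast_nonneg _
    have : (10 * t : ℝ) ≤ n := by linarith
    exact_mod_cast this
  have htn : t ≤ n := by omega
  have hTc : (TT t n).verts.card = n := by rw [TT_verts htn, card_range]
  have hTT := TT_count htn
  rw [← TT_verts htn, ofH_tot] at hTT
  -- structure of graphs with at least as many edges
  have hup : ∀ H : HGraph 3, H.verts.card = n → ¬ (genTri 3).HasMatching H (t + 1) →
      (TT t n).edges.card ≤ H.edges.card → TG.d3 n + 6 * TN (n - t) = 6 * H.edges.card + TG.d3 (n - t) ∧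
      ∃ A ⊆ H.verts, A.card = t ∧ (∀ x ∈ H.verts, ∀ y ∈ H.verts, ∀ z ∈ H.verts, x ≠ y → x ≠ z → y ≠ z →
        (x ∈ A ∨ y ∈ A ∨ z ∈ A) → (ofH H).R x y z) ∧ ∃ f : ℕ → Fin 3,
        (TG.part f (H.verts \ A) 0).card * (TG.part f (H.verts \ A) 1).card * (TG.part f (H.verts \ A) 2).card
          = TN (n - t) ∧
        ∀ x ∈ H.verts \ A, ∀ y ∈ H.verts \ A, ∀ z ∈ H.verts \ A,
          (ofH H).R x y z ↔ (f x ≠ f y ∧ f x ≠ f z ∧ f y ≠ f z) := by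
    intro H hH hno hle
    have := hN (ofH H) H.verts t (by omega) (by rw [hH]; exact ht)
      (fun ⟨X, hX, hPK⟩ => hno (hasMatching_of_PK hX hPK))
      (by rw [hH, ofH_tot]; omega)
    rw [hH, ofH_tot] at this
    exact this
  have hTeq := (hup (TT t n) hTc (TT_nomatch htn) le_rfl).1
  have hbound : ∀ H : HGraph 3, H.verts.card = n → ¬ (genTri 3).HasMatching H (t + 1) →
      H.edges.card ≤ (TT t n).edges.card := by
    intro H hH hno
    by_contra hlt
    have := (hup H hH hno (by omega)).1
    omega
  have hex : exMatchN 3 n t (genTri 3) = (TT t n).edges.card := by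
    unfold exMatchN
    refine le_antisymm (csSup_le ⟨_, TT t n, hTc, TT_nomatch htn, rfl⟩ ?_) (le_csSup ⟨(TT t n).edges.card, ?_⟩ ?_)
    · rintro m ⟨H, h1, h2, rfl⟩; exact hbound H h1 h2
    · rintro m ⟨H, h1, h2, rfl⟩; exact hbound H h1 h2
    · exact ⟨TT t n, hTc, TT_nomatch htn, rfl⟩
  unfold IsExtremalMatchingFree
  rw [hex]
  constructor
  · rintro ⟨h1, h2, h3⟩
    obtain ⟨_, A, hA, hAc, hall, f, hf1, hf2⟩ := hup H h1 h2 h3.ge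
    obtain ⟨c, hc1, hc2⟩ := color_of hA hAc (by omega : 3 ≤ n - t) (by omega) hall hf1 hf2
    have hAT : range t ⊆ range n := range_subset_range.2 htn
    obtain ⟨c', hc1', hc2'⟩ := color_of (G := ofH (TT t n)) (f := f3) hAT (card_range t) (by omega : 3 ≤ n - t)
      (by rw [card_range]; omega) (TT_all htn) (by rw [TT_sdiff]; exact TT_prod htn)
      (by rw [TT_sdiff]; exact TT_part htn)
    rw [← TT_verts htn] at hc1' hc2'
    exact iso_of_color (fun o => by rw [hc1, hc1']) hc2 hc2'
  · intro hiso
    refine ⟨?_, fun h => TT_nomatch htn (iso_matching hiso h), iso_edges hiso⟩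
    obtain ⟨g, hg, _⟩ := hiso
    rw [hg.finsetCard_eq, hTc]

end

/-- the density Corrádi–Hajnal theorem for the 3-uniform
generalized triangle. -/
theorem statement_7 :
    ∃ N₀ : ℕ, ∃ c : ℝ, 0 < c ∧ ∀ n : ℕ, N₀ ≤ n → ∀ t : ℕ, (t : ℝ) ≤ c * n →
      ∀ H : HGraph 3, IsExtremalMatchingFree 3 n t (genTri 3) H ↔
        H.Iso ((completeOn 3 (Finset.range t)).join (turanOn 3 3 (Finset.Ico t n))) := by
  exact statement_seven_aux

end DensityCH
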